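/- arXiv:1408.0529 — 3 statements merged into one kernel-verified Lean document; each statement's English description precedes it below -/
import Mathlib

section
/- Let π be an irreducible pair on a finite alphabet A. If Λ(π) is simple, then G(π) equals the alternating group Alt(A); if Λ(π) is not simple, then G(π) equals the full symmetric group Sym(A). -/
open Equiv

/-- A (labeled) pair on alphabet `A`: two bijections from `A` to positions.
Positions are `Fin (Fintype.card A)`, 0-indexed: position `j : Fin N`
corresponds to the position `j+1 ∈ {1,…,N}` of the paper. -/
abbrev RPair (A : Type*) [Fintype A] := Bool → (A ≃ Fin (Fintype.card A))

variable {A : Type*} [Fintype A]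

/-- Irreducibility: `π₁(π₀⁻¹({1,…,k})) = {1,…,k}` only for `k = N`. -/
def PairIrreducible (π : RPair A) : Prop :=
  ∀ k : Fin (Fintype.card A),
    (∀ x : A, π false x ≤ k → π true x ≤ k) → (k : ℕ) + 1 = Fintype.card A

/-- Type-ε right Rauzy induction sends `π` to `π'`.  Here `zc = π_ε⁻¹(N)` and
`zo = π_{1-ε}⁻¹(N)` are characterized as the letters of maximal position. -/
def RightMove (π π' : RPair A) : Prop :=
  ∃ ε : Bool, ∃ zc zo : A,
    (∀ x : A, π ε x ≤ π ε zc) ∧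
    (∀ x : A, π (!ε) x ≤ π (!ε) zo) ∧
    π' ε = π ε ∧
    (∀ b : A, π (!ε) b ≤ π (!ε) zc → π' (!ε) b = π (!ε) b) ∧
    ((π' (!ε) zo : ℕ) = (π (!ε) zc : ℕ) + 1) ∧
    (∀ b : A, ¬ π (!ε) b ≤ π (!ε) zc → b ≠ zo → (π' (!ε) b : ℕ) = (π (!ε) b : ℕ) + 1)

/-- Type-ε left Rauzy induction sends `π` to `π'`.  Here `ac = π_ε⁻¹(1)` and
`ao = π_{1-ε}⁻¹(1)` are characterized as the letters of minimal position. -/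
def LeftMove (π π' : RPair A) : Prop :=
  ∃ ε : Bool, ∃ ac ao : A,
    (∀ x : A, π ε ac ≤ π ε x) ∧
    (∀ x : A, π (!ε) ao ≤ π (!ε) x) ∧
    π' ε = π ε ∧
    (∀ b : A, π (!ε) ac ≤ π (!ε) b → π' (!ε) b = π (!ε) b) ∧
    ((π' (!ε) ao : ℕ) = (π (!ε) ac : ℕ) - 1) ∧
    (∀ b : A, ¬ π (!ε) ac ≤ π (!ε) b → b ≠ ao → (π' (!ε) b : ℕ) = (π (!ε) b : ℕ) - 1)

/-- The Rauzy class `R(π)`: pairs reachable by right Rauzy inductions. -/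
def RClass (π : RPair A) : Set (RPair A) := {ρ | Relation.ReflTransGen RightMove π ρ}

/-- The extended Rauzy class `E(π)`: pairs reachable by left and right Rauzy inductions. -/
def EClass (π : RPair A) : Set (RPair A) :=
  {ρ | Relation.ReflTransGen (fun x y => RightMove x y ∨ LeftMove x y) π ρ}

/-- `π ∘ ν = (π₀ ∘ ν, π₁ ∘ ν)`. -/
def pairRename (π : RPair A) (ν : Equiv.Perm A) : RPair A := fun ε => ν.trans (π ε)

/-- The renaming set `G(π) = {ν : π ∘ ν ∈ E(π)}`. -/
def renamings (π : RPair A) : Set (Equiv.Perm A) := {ν | pairRename π ν ∈ EClass π}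

/-- The non-labeled permutation `π₁ ∘ π₀⁻¹`. -/
def nonlabeled (π : RPair A) : Equiv.Perm (Fin (Fintype.card A)) :=
  (π false).symm.trans (π true)

/-- The position `1` (smallest). -/
def posFirst (A : Type*) [Fintype A] [Nonempty A] : Fin (Fintype.card A) :=
  ⟨0, Fintype.card_pos⟩

/-- The position `N` (largest). -/
def posLast (A : Type*) [Fintype A] [Nonempty A] : Fin (Fintype.card A) :=
  ⟨Fintype.card A - 1, Nat.sub_lt Fintype.card_pos Nat.one_pos⟩

/-- A pair is standard if `π₀(π₁⁻¹(1)) = π₁(π₀⁻¹(1)) = N`. -/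
def PairStandard [Nonempty A] (π : RPair A) : Prop :=
  π false ((π true).symm (posFirst A)) = posLast A ∧
  π true ((π false).symm (posFirst A)) = posLast A

/-- `S` is the permutation `S(π)` of the paper. -/
def IsS [Nonempty A] (π : RPair A) (S : Equiv.Perm A) : Prop :=
  ∀ b : A,
    (π true b = posFirst A → S b = (π false).symm (posFirst A)) ∧
    (π true b ≠ posFirst A →
      (((π true b : ℕ) = (π true ((π false).symm (posLast A)) : ℕ) + 1 →
        (π false (S b) : ℕ) = (π false ((π true).symm (posLast A)) : ℕ) + 1) ∧
      ((π true b : ℕ) ≠ (π true ((π false).symm (posLast A)) : ℕ) + 1 →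
        (π false (S b) : ℕ) =
          (π false ((π true).symm
            ⟨(π true b : ℕ) - 1,
              Nat.lt_of_le_of_lt (Nat.sub_le _ _) (π true b).isLt⟩) : ℕ) + 1)))

/-- The marked letter `X(π) = π₀⁻¹(1)`. -/
def XOf [Nonempty A] (π : RPair A) : A := (π false).symm (posFirst A)

/-- `Q` is the permutation `Q(π)` of the paper (constructed from `S = S(π)`). -/
def IsQ [Nonempty A] (π : RPair A) (S Q : Equiv.Perm A) : Prop :=
  Q (XOf π) = XOf π ∧
  ∀ b : A, b ≠ XOf π →
    (S b = XOf π → Q b = S (S b)) ∧ (S b ≠ XOf π → Q b = S b)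

/-- `Λ`: the multiset of cardinalities of the orbits of `Q` on `A ∖ {X}`
(for `Q` fixing `X`): the nontrivial cycle lengths of `Q` together with one `1`
for each fixed point of `Q` other than `X`. -/
def lamOf [DecidableEq A] (Q : Equiv.Perm A) : Multiset ℕ :=
  Q.cycleType + Multiset.replicate ((Finset.univ.filter fun a => Q a = a).card - 1) 1

/-- The centralizer `Z(π)` of `(X(π), Q(π))`. -/
def ZOf [Nonempty A] (π : RPair A) (Q : Equiv.Perm A) : Set (Equiv.Perm A) :=
  {ν | ν (XOf π) = XOf π ∧ ν⁻¹ * Q * ν = Q}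

theorem det_one_of_alt.{u} (n : ℕ) : ∀ {V : Type u} [AddCommGroup V] [Module ℚ V] [FiniteDimensional ℚ V]
    (B : LinearMap.BilinForm ℚ V) (_ : B.IsAlt) (T : V →ₗ[ℚ] V)
    (_ : ∀ x y, B (T x) (T y) = B x y) (_ : ∀ x, (∀ y, B x y = 0) → T x = x)
    (_ : Module.finrank ℚ V = n), LinearMap.det T = 1 := by
  induction n with
  | zero =>
    intro V _ _ _ B hB T hT hr hn
    exact LinearMap.det_eq_one_of_finrank_eq_zero hn T
  | succ n ih =>
    intro V _ _ _ B hB T hT hr hn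
    have neg : ∀ x y, B x y = - B y x := fun x y => by rw [LinearMap.IsAlt.neg hB]
    by_cases h0 : ∀ v y, B v y = 0
    · have : T = LinearMap.id := by ext x; exact hr x (h0 x)
      rw [this]; simp
    push Not at h0
    obtain ⟨v, y0, hv⟩ := h0
    -- case where T fixes v
    have key : ∀ T : V →ₗ[ℚ] V, (∀ x y, B (T x) (T y) = B x y) →
        (∀ x, (∀ y, B x y = 0) → T x = x) → T v = v → LinearMap.det T = 1 := by
      intro T hT hr hTv
      let W : Submodule ℚ V := LinearMap.ker (B v)
      have hW : ∀ x, x ∈ W ↔ B v x = 0 := fun x => LinearMap.mem_ker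
      have hTW : W ≤ W.comap T := by
        intro x hx
        rw [Submodule.mem_comap, hW, ← hTv, hT]; exact (hW x).1 hx
      rw [LinearMap.det_eq_det_mul_det W T hTW]
      have h1 : W.mapQ W T hTW = LinearMap.id := by
        ext x
        simp only [LinearMap.coe_comp, Function.comp_apply, Submodule.mkQ_apply, Submodule.mapQ_apply, LinearMap.id_apply]
        rw [Submodule.Quotient.eq, hW, map_sub, sub_eq_zero]
        conv_lhs => rw [← hTv]
        exact hT v x
      rw [h1, LinearMap.det_id, mul_one]
      have hfr : Module.finrank ℚ W = n := by
        have := LinearMap.finrank_range_add_finrank_ker (B v)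
        have h2 : LinearMap.range (B v) = ⊤ := by
          rw [LinearMap.range_eq_top]
          intro c
          refine ⟨(c / B v y0) • y0, ?_⟩
          simp [hv]
        rw [h2, finrank_top, hn] at this
        simp only [Module.finrank_self] at this
        change 1 + Module.finrank ℚ W = n + 1 at this
        omega
      refine ih (B.restrict W) ?_ (T.restrict hTW) ?_ ?_ hfr
      · intro x; exact hB x
      · intro x y; exact hT x y
      · intro x hx
        ext
        simp only [LinearMap.coe_restrict_apply]
        -- x = x' + c v with x' in the radical
        set c := B x y0 / B v y0 with hc
        have hrad : ∀ y, B ((x:V) - c • v) y = 0 := by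
          intro y
          have hy : y - (B v y / B v y0) • y0 ∈ W := by
            rw [hW]; simp [hv]
          have := hx ⟨_, hy⟩
          simp only [LinearMap.BilinForm.restrict_apply, LinearMap.domRestrict_apply] at this
          rw [map_sub, map_smul, smul_eq_mul] at this
          rw [map_sub, map_smul, LinearMap.sub_apply, LinearMap.smul_apply, smul_eq_mul, hc]
          field_simp at this ⊢
          linarith
        have h3 := hr _ hrad
        rw [map_sub, map_smul, hTv] at h3
        exact sub_left_injective h3
    -- transvections
    let tv : V → ℚ → V →ₗ[ℚ] V := fun s c => LinearMap.transvection (c • B s) s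
    have htv : ∀ s c x, tv s c x = x + (c * B s x) • s := by
      intro s c x; simp [tv, LinearMap.transvection]
    have hdet : ∀ s c, LinearMap.det (tv s c) = 1 := by
      intro s c
      simp only [tv]
      rw [LinearMap.transvection.det]
      simp [hB s]
    have hpres : ∀ s c x y, B (tv s c x) (tv s c y) = B x y := by
      intro s c x y
      simp only [htv, map_add, map_smul, LinearMap.add_apply, LinearMap.smul_apply, smul_eq_mul, hB s]
      rw [neg x s]; ring
    have hradT : ∀ s c x, (∀ y, B x y = 0) → tv s c x = x := by
      intro s c x hx
      rw [htv, neg, hx]; simp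
    -- step with B v (T v) ≠ 0
    have key2 : ∀ T : V →ₗ[ℚ] V, (∀ x y, B (T x) (T y) = B x y) →
        (∀ x, (∀ y, B x y = 0) → T x = x) → B v (T v) ≠ 0 → LinearMap.det T = 1 := by
      intro T hT hr hne
      have h := key (tv (T v - v) ((B v (T v))⁻¹) ∘ₗ T) ?_ ?_ ?_
      · rw [LinearMap.det_comp, hdet, one_mul] at h; exact h
      · intro x y; simp only [LinearMap.comp_apply, hpres, hT]
      · intro x hx; simp only [LinearMap.comp_apply]; rw [hr x hx, hradT _ _ _ hx]
      · simp only [LinearMap.comp_apply, htv]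
        have : B (T v - v) (T v) = - B v (T v) := by
          simp [hB (T v)]
        rw [this, mul_neg, inv_mul_cancel₀ hne]; simp
    have hTv0 : ∃ s, B (T v) s ≠ 0 := ⟨T y0, by rw [hT]; exact hv⟩
    obtain ⟨s2, hs2⟩ := hTv0
    have hs : ∃ s, B v s ≠ 0 ∧ B (T v) s ≠ 0 := by
      by_cases h1 : B (T v) y0 = 0
      · by_cases h2 : B v s2 = 0
        · exact ⟨y0 + s2, by simp [h2, hv], by simp [h1, hs2]⟩
        · exact ⟨s2, h2, hs2⟩
      · exact ⟨y0, hv, h1⟩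
    obtain ⟨s, hs1, hs2⟩ := hs
    by_cases hne : B v (T v) = 0
    · have h := key2 (tv s 1 ∘ₗ T) ?_ ?_ ?_
      · rw [LinearMap.det_comp, hdet, one_mul] at h; exact h
      · intro x y; simp only [LinearMap.comp_apply, hpres, hT]
      · intro x hx; simp only [LinearMap.comp_apply]; rw [hr x hx, hradT _ _ _ hx]
      · simp only [LinearMap.comp_apply, htv, map_add, hne, map_smul, smul_eq_mul, zero_add, one_mul]
        rw [neg s]
        exact mul_ne_zero (neg_ne_zero.2 hs2) hs1
    · exact key2 T hT hr hne

def toL (e : A ≃ Fin (Fintype.card A)) : List A := List.ofFn e.symm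

theorem toL_length (e : A ≃ Fin (Fintype.card A)) : (toL e).length = Fintype.card A := by
  simp [toL]

theorem toL_get (e : A ≃ Fin (Fintype.card A)) (i : ℕ) (h : i < (toL e).length) :
    (toL e)[i] = e.symm ⟨i, by rw [toL_length] at h; exact h⟩ := by
  simp [toL]

theorem toL_inj {e e' : A ≃ Fin (Fintype.card A)} (h : toL e = toL e') : e = e' := by
  have := List.ofFn_injective h
  have h2 : e.symm = e'.symm := Equiv.ext (fun x => congrFun this x)
  rw [← e.symm_symm, h2, e'.symm_symm]

theorem toL_nodup (e : A ≃ Fin (Fintype.card A)) : (toL e).Nodup :=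
  List.nodup_ofFn.2 e.symm.injective

theorem mem_toL (e : A ≃ Fin (Fintype.card A)) (a : A) : a ∈ toL e := by
  rw [toL, List.mem_ofFn]; exact ⟨e a, by simp⟩

theorem toL_pos {e : A ≃ Fin (Fintype.card A)} {u v : List A} {a : A} (h : toL e = u ++ a :: v) :
    (e a : ℕ) = u.length := by
  have hl : u.length < (toL e).length := by rw [h]; simp
  have h1 := toL_get e u.length hl
  have h2 : (toL e)[u.length] = a := by simp [h]
  rw [h2] at h1
  rw [h1]; simp

theorem toL_split (e : A ≃ Fin (Fintype.card A)) (a : A) : ∃ u v, toL e = u ++ a :: v :=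
  List.append_of_mem (mem_toL e a)

theorem exists_toL {L : List A} (h1 : L.Nodup) (h2 : ∀ a, a ∈ L) : ∃ e, toL e = L := by
  classical
  have hl : L.length = Fintype.card A := by
    have : L.toFinset = Finset.univ := by ext a; simp [h2]
    rw [← List.toFinset_card_of_nodup h1, this, Finset.card_univ]
  refine ⟨((List.Nodup.getEquivOfForallMemList L h1 h2).symm.trans (finCongr hl)), ?_⟩
  apply List.ext_getElem
  · rw [toL_length, hl]
  · intro i h h'
    rw [toL_get]
    simp [List.Nodup.getEquivOfForallMemList]

theorem exists_toL_perm {e : A ≃ Fin (Fintype.card A)} {L : List A} (h : L.Perm (toL e)) :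
    ∃ e', toL e' = L :=
  exists_toL (h.nodup_iff.2 (toL_nodup e)) (fun a => h.mem_iff.2 (mem_toL e a))

theorem toL_eq_of_pos {e : A ≃ Fin (Fintype.card A)} {L : List A} (hp : L.Perm (toL e))
    (h : ∀ u a v, L = u ++ a :: v → (e a : ℕ) = u.length) : toL e = L := by
  obtain ⟨e', he'⟩ := exists_toL_perm hp
  rw [← he']
  congr 1
  ext a
  obtain ⟨u, v, huv⟩ := toL_split e' a
  rw [toL_pos huv, h u a v (he' ▸ huv)]

theorem toL_trans (ν : Perm A) (e : A ≃ Fin (Fintype.card A)) :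
    toL (ν.trans e) = (toL e).map ν.symm := by
  simp [toL, List.map_ofFn, Function.comp_def]

def IsP (π : RPair A) (ε : Bool) (T B : List A) : Prop := toL (π ε) = T ∧ toL (π (!ε)) = B

theorem IsP.swap {π : RPair A} {ε T B} (h : IsP π ε T B) : IsP π (!ε) B T :=
  ⟨h.2, by rw [Bool.not_not]; exact h.1⟩

theorem IsP.uniq {π π' : RPair A} {ε T B} (h : IsP π ε T B) (h' : IsP π' ε T B) : π = π' := by
  have h1 := toL_inj (h.1.trans h'.1.symm)
  have h2 := toL_inj (h.2.trans h'.2.symm)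
  funext δ
  cases ε <;> cases δ <;> assumption

theorem IsP.exists_perm {π : RPair A} {ε T B} (h : IsP π ε T B) {T' B' : List A}
    (hT : T'.Perm T) (hB : B'.Perm B) : ∃ π', IsP π' ε T' B' := by
  obtain ⟨e, he⟩ := exists_toL_perm (e := π ε) (L := T') (by rw [h.1]; exact hT)
  obtain ⟨e', he'⟩ := exists_toL_perm (e := π (!ε)) (L := B') (by rw [h.2]; exact hB)
  refine ⟨fun δ => if δ = ε then e else e', ?_, ?_⟩
  · simpa using he
  · simpa using he'

theorem IsP.rename {π : RPair A} {ε T B} (h : IsP π ε T B) (ν : Perm A) :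
    IsP (pairRename π ν) ε (T.map ν.symm) (B.map ν.symm) :=
  ⟨by rw [pairRename, toL_trans, h.1], by rw [pairRename, toL_trans, h.2]⟩

theorem isP_self (π : RPair A) (ε : Bool) : IsP π ε (toL (π ε)) (toL (π (!ε))) := ⟨rfl, rfl⟩

theorem split_cases {u v : List A} {a b : A} {w1 w2 : List A} (h : u ++ a :: v = w1 ++ b :: w2) :
    (∃ t, u = w1 ++ b :: t ∧ w2 = t ++ a :: v) ∨ (u = w1 ∧ a = b ∧ v = w2) ∨
    (∃ t, w1 = u ++ a :: t ∧ v = t ++ b :: w2) := by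
  rw [List.append_eq_append_iff] at h
  rcases h with ⟨as, h1, h2⟩ | ⟨as, h1, h2⟩
  · cases as with
    | nil => right; left; simp at h1 h2; simp_all
    | cons c as => right; right; simp at h2; obtain ⟨rfl, rfl⟩ := h2; exact ⟨as, h1, rfl⟩
  · cases as with
    | nil => right; left; simp at h1 h2; simp_all
    | cons c as => left; simp at h2; obtain ⟨rfl, rfl⟩ := h2; exact ⟨as, h1, rfl⟩

theorem pos_lt_split {e : A ≃ Fin (Fintype.card A)} {u v : List A} {a b : A} (h : toL e = u ++ a :: v)
    (hb : e b < e a) : ∃ u1 u2, u = u1 ++ b :: u2 := by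
  obtain ⟨w1, w2, hw⟩ := toL_split e b
  rw [h] at hw
  have h1 := toL_pos h
  have h2 := toL_pos (h.trans hw)
  have hlt : (e b : ℕ) < e a := hb
  rcases split_cases hw with ⟨t, h3, -⟩ | ⟨h3, -, -⟩ | ⟨t, h3, -⟩
  · exact ⟨_, _, h3⟩
  · subst h3; omega
  · subst h3; simp at h2; omega

def RMv (ε : Bool) (zc zo : A) (π π' : RPair A) : Prop :=
    (∀ x : A, π ε x ≤ π ε zc) ∧
    (∀ x : A, π (!ε) x ≤ π (!ε) zo) ∧
    π' ε = π ε ∧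
    (∀ b : A, π (!ε) b ≤ π (!ε) zc → π' (!ε) b = π (!ε) b) ∧
    ((π' (!ε) zo : ℕ) = (π (!ε) zc : ℕ) + 1) ∧
    (∀ b : A, ¬ π (!ε) b ≤ π (!ε) zc → b ≠ zo → (π' (!ε) b : ℕ) = (π (!ε) b : ℕ) + 1)

def LMv (ε : Bool) (ac ao : A) (π π' : RPair A) : Prop :=
    (∀ x : A, π ε ac ≤ π ε x) ∧
    (∀ x : A, π (!ε) ao ≤ π (!ε) x) ∧
    π' ε = π ε ∧
    (∀ b : A, π (!ε) ac ≤ π (!ε) b → π' (!ε) b = π (!ε) b) ∧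
    ((π' (!ε) ao : ℕ) = (π (!ε) ac : ℕ) - 1) ∧
    (∀ b : A, ¬ π (!ε) ac ≤ π (!ε) b → b ≠ ao → (π' (!ε) b : ℕ) = (π (!ε) b : ℕ) - 1)

theorem right_of_lists {π π' : RPair A} {ε : Bool} {α β : A} {t u v : List A}
    (h : IsP π ε (t ++ [α]) (u ++ α :: (v ++ [β]))) (h' : IsP π' ε (t ++ [α]) (u ++ α :: β :: v)) :
    RMv ε α β π π' := by
  have hle : ∀ {e : A ≃ Fin (Fintype.card A)} {L : List A} {a x : A}, toL e = L ++ [a] → e x ≤ e a := by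
    intro e L a x h
    have h1 := toL_pos h
    have h2 := toL_length e
    rw [h] at h2; simp at h2
    have := (e x).isLt
    rw [Fin.le_def]; omega
  have hα := toL_pos h.2
  have hβ : (π (!ε) β : ℕ) = (u ++ α :: v).length := toL_pos (v := []) (by rw [h.2]; simp)
  have hβ' : (π' (!ε) β : ℕ) = (u ++ [α]).length := toL_pos (v := v) (by rw [h'.2]; simp)
  refine ⟨fun x => hle h.1, fun x => hle (L := u ++ α :: v) (by rw [h.2]; simp), 
    toL_inj (h'.1.trans h.1.symm), ?_, ?_, ?_⟩
  · intro b hb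
    rw [Fin.le_def] at hb
    ext
    rcases (lt_or_eq_of_le hb) with hb | hb
    · obtain ⟨u1, u2, rfl⟩ := pos_lt_split h.2 hb
      rw [toL_pos (e := π (!ε)) (a := b) (u := u1) (v := u2 ++ α :: (v ++ [β])) (by rw [h.2]; simp),
        toL_pos (e := π' (!ε)) (a := b) (u := u1) (v := u2 ++ α :: β :: v) (by rw [h'.2]; simp)]
    · have : b = α := (π (!ε)).injective (Fin.ext hb)
      subst this
      rw [hα, toL_pos h'.2]
  · rw [hβ', hα]; simp
  · intro b hb hbβ
    have hbm : b ∈ toL (π (!ε)) := mem_toL _ _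
    rw [h.2] at hbm
    simp at hbm
    rcases hbm with hb1 | rfl | hb1 | hb1
    · obtain ⟨u1, u2, rfl⟩ := List.append_of_mem hb1
      exfalso; apply hb; rw [Fin.le_def, hα, toL_pos (e := π (!ε)) (a := b) (u := u1) (v := u2 ++ α :: (v ++ [β])) (by rw [h.2]; simp)]
      simp
    · exact absurd le_rfl hb
    · obtain ⟨u1, u2, rfl⟩ := List.append_of_mem hb1
      rw [toL_pos (e := π (!ε)) (a := b) (u := u ++ α :: u1) (v := u2 ++ [β]) (by rw [h.2]; simp),
        toL_pos (e := π' (!ε)) (a := b) (u := u ++ α :: β :: u1) (v := u2) (by rw [h'.2]; simp)]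
      simp; ring
    · exact absurd hb1 hbβ

theorem left_of_lists {π π' : RPair A} {ε : Bool} {α β : A} {t u v : List A}
    (h : IsP π ε (α :: t) (β :: v ++ α :: u)) (h' : IsP π' ε (α :: t) (v ++ β :: α :: u)) :
    LMv ε α β π π' := by
  have hle : ∀ {e : A ≃ Fin (Fintype.card A)} {L : List A} {a x : A}, toL e = a :: L → e a ≤ e x := by
    intro e L a x h
    have h1 := toL_pos (u := []) h
    rw [Fin.le_def, h1]; simp
  have hα := toL_pos h.2
  have hβ' : (π' (!ε) β : ℕ) = v.length := toL_pos h'.2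
  have hα' : (π' (!ε) α : ℕ) = (v ++ [β]).length := toL_pos (v := u) (by rw [h'.2]; simp)
  refine ⟨fun x => hle h.1, fun x => hle h.2,
    toL_inj (h'.1.trans h.1.symm), ?_, ?_, ?_⟩
  · intro b hb
    have hbm : b ∈ toL (π (!ε)) := mem_toL _ _
    rw [Fin.le_def, hα] at hb
    rw [h.2] at hbm
    simp at hbm
    ext
    rcases hbm with rfl | hb1 | rfl | hb1
    · have := toL_pos (u := []) h.2
      rw [this] at hb; simp at hb
    · obtain ⟨u1, u2, rfl⟩ := List.append_of_mem hb1
      rw [toL_pos (e := π (!ε)) (a := b) (u := β :: u1) (v := u2 ++ α :: u) (by rw [h.2]; simp)] at hb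
      simp at hb
    · rw [hα, hα']; simp
    · obtain ⟨u1, u2, rfl⟩ := List.append_of_mem hb1
      rw [toL_pos (e := π (!ε)) (a := b) (u := β :: v ++ α :: u1) (v := u2) (by rw [h.2]; simp),
        toL_pos (e := π' (!ε)) (a := b) (u := v ++ β :: α :: u1) (v := u2) (by rw [h'.2]; simp)]
      simp; ring
  · rw [hβ', hα]; simp
  · intro b hb hbβ
    rw [Fin.le_def, not_le] at hb
    obtain ⟨u1, u2, h3⟩ := pos_lt_split h.2 hb
    cases u1 with
    | nil => simp at h3; exact absurd h3.1.symm hbβ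
    | cons c u1 =>
      simp at h3; obtain ⟨rfl, rfl⟩ := h3
      rw [toL_pos (e := π (!ε)) (a := b) (u := β :: u1) (v := u2 ++ α :: u) (by rw [h.2]; simp),
        toL_pos (e := π' (!ε)) (a := b) (u := u1) (v := u2 ++ β :: α :: u) (by rw [h'.2]; simp)]
      simp

theorem toL_last {e : A ≃ Fin (Fintype.card A)} {a : A} (h : ∀ x, e x ≤ e a) : ∃ t, toL e = t ++ [a] := by
  obtain ⟨u, v, huv⟩ := toL_split e a
  cases v with
  | nil => exact ⟨u, huv⟩
  | cons c v =>
    exfalso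
    have h1 := toL_pos huv
    have h2 := toL_pos (u := u ++ [a]) (v := v) (a := c) (e := e) (by rw [huv]; simp)
    have := Fin.le_def.1 (h c)
    simp at h2; omega

theorem toL_first {e : A ≃ Fin (Fintype.card A)} {a : A} (h : ∀ x, e a ≤ e x) : ∃ t, toL e = a :: t := by
  obtain ⟨u, v, huv⟩ := toL_split e a
  cases u with
  | nil => exact ⟨v, huv⟩
  | cons c u =>
    exfalso
    have h1 := toL_pos huv
    have h2 := toL_pos (u := []) huv
    have := Fin.le_def.1 (h c)
    simp at h1 h2; omega

theorem RMv.func {ε : Bool} {α β : A} {π π' π'' : RPair A} (h : RMv ε α β π π') (h2 : RMv ε α β π π'') :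
    π' = π'' := by
  obtain ⟨-, -, h3, h4, h5, h6⟩ := h
  obtain ⟨-, -, g3, g4, g5, g6⟩ := h2
  have : π' (!ε) = π'' (!ε) := by
    ext b
    by_cases hb : π (!ε) b ≤ π (!ε) α
    · rw [h4 b hb, g4 b hb]
    · by_cases hb2 : b = β
      · subst hb2; rw [h5, g5]
      · rw [h6 b hb hb2, g6 b hb hb2]
  funext δ
  have h7 := h3.trans g3.symm
  cases ε <;> cases δ <;> assumption

theorem LMv.func {ε : Bool} {α β : A} {π π' π'' : RPair A} (h : LMv ε α β π π') (h2 : LMv ε α β π π'') :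
    π' = π'' := by
  obtain ⟨-, -, h3, h4, h5, h6⟩ := h
  obtain ⟨-, -, g3, g4, g5, g6⟩ := h2
  have : π' (!ε) = π'' (!ε) := by
    ext b
    by_cases hb : π (!ε) α ≤ π (!ε) b
    · rw [h4 b hb, g4 b hb]
    · by_cases hb2 : b = β
      · subst hb2; rw [h5, g5]
      · rw [h6 b hb hb2, g6 b hb hb2]
  funext δ
  have h7 := h3.trans g3.symm
  cases ε <;> cases δ <;> assumption

theorem lists_of_right {π π' : RPair A} (h : RightMove π π') : ∃ ε α β t u v,
    IsP π ε (t ++ [α]) (u ++ α :: (v ++ [β])) ∧ IsP π' ε (t ++ [α]) (u ++ α :: β :: v) := by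
  obtain ⟨ε, α, β, h⟩ := h
  change RMv ε α β π π' at h
  have hne : α ≠ β := by
    rintro rfl
    have h1 := h.2.2.2.2.1
    have h2 := h.2.2.2.1 α le_rfl
    rw [h2] at h1; omega
  obtain ⟨t, ht⟩ := toL_last h.1
  obtain ⟨s, hs⟩ := toL_last h.2.1
  have : α ∈ s := by
    have := mem_toL (π (!ε)) α
    rw [hs] at this; simpa [hne] using this
  obtain ⟨u, v, rfl⟩ := List.append_of_mem this
  have h0 : IsP π ε (t ++ [α]) (u ++ α :: (v ++ [β])) := ⟨ht, by rw [hs]; simp⟩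
  obtain ⟨π'', h2⟩ := h0.exists_perm (T' := t ++ [α]) (B' := u ++ α :: β :: v) (List.Perm.refl _)
    (List.Perm.append_left _ (List.Perm.cons _ (List.perm_append_comm (l₁ := [β]) (l₂ := v))))
  have := h.func (right_of_lists h0 h2)
  subst this
  exact ⟨ε, α, β, t, u, v, h0, h2⟩

theorem lists_of_left {π π' : RPair A} (h : LeftMove π π') : π' = π ∨ ∃ ε α β t u v,
    IsP π ε (α :: t) (β :: v ++ α :: u) ∧ IsP π' ε (α :: t) (v ++ β :: α :: u) := by
  obtain ⟨ε, α, β, h⟩ := h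
  change LMv ε α β π π' at h
  by_cases hne : α = β
  · left
    subst hne
    obtain ⟨-, h2, h3, h4, -, -⟩ := h
    have : π' (!ε) = π (!ε) := by ext b; rw [h4 b (h2 b)]
    funext δ
    cases ε <;> cases δ <;> assumption
  right
  obtain ⟨t, ht⟩ := toL_first h.1
  obtain ⟨s, hs⟩ := toL_first h.2.1
  have : α ∈ s := by
    have := mem_toL (π (!ε)) α
    rw [hs] at this; simpa [hne] using this
  obtain ⟨v, u, rfl⟩ := List.append_of_mem this
  have h0 : IsP π ε (α :: t) (β :: v ++ α :: u) := ⟨ht, by rw [hs]; simp⟩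
  obtain ⟨π'', h2⟩ := h0.exists_perm (T' := α :: t) (B' := v ++ β :: α :: u) (List.Perm.refl _)
    (by simpa using List.perm_middle (a := β) (l₁ := v) (l₂ := α :: u))
  have := h.func (left_of_lists h0 h2)
  subst this
  exact ⟨ε, α, β, t, u, v, h0, h2⟩

/-- reachable by lists -/
def RL (π : RPair A) (ε : Bool) (T B : List A) : Prop := ∃ π', IsP π' ε T B ∧ π' ∈ EClass π

theorem RL.swap {π : RPair A} {ε T B} (h : RL π ε T B) : RL π (!ε) B T := by
  obtain ⟨π', h1, h2⟩ := h
  exact ⟨π', h1.swap, h2⟩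

theorem RL.swap' {π : RPair A} {ε T B} (h : RL π (!ε) B T) : RL π ε T B := by
  have := h.swap
  rwa [Bool.not_not] at this

theorem RL.right1 {π : RPair A} {ε : Bool} {α β : A} {t u v : List A}
    (h : RL π ε (t ++ [α]) (u ++ α :: (v ++ [β]))) : RL π ε (t ++ [α]) (u ++ α :: β :: v) := by
  obtain ⟨π', h1, h2⟩ := h
  obtain ⟨π'', h3⟩ := h1.exists_perm (T' := t ++ [α]) (B' := u ++ α :: β :: v) (List.Perm.refl _)
    (List.Perm.append_left _ (List.Perm.cons _ (List.perm_append_comm (l₁ := [β]) (l₂ := v))))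
  exact ⟨π'', h3, Relation.ReflTransGen.tail h2 (Or.inl ⟨ε, α, β, right_of_lists h1 h3⟩)⟩

theorem RL.left1 {π : RPair A} {ε : Bool} {α β : A} {t u v : List A}
    (h : RL π ε (α :: t) (β :: v ++ α :: u)) : RL π ε (α :: t) (v ++ β :: α :: u) := by
  obtain ⟨π', h1, h2⟩ := h
  obtain ⟨π'', h3⟩ := h1.exists_perm (T' := α :: t) (B' := v ++ β :: α :: u) (List.Perm.refl _)
    (by simpa using List.perm_middle (a := β) (l₁ := v) (l₂ := α :: u))
  exact ⟨π'', h3, Relation.ReflTransGen.tail h2 (Or.inr ⟨ε, α, β, left_of_lists h1 h3⟩)⟩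

theorem RL.right {π : RPair A} {ε : Bool} {α : A} {t u : List A} (w : List A) : ∀ {v : List A},
    RL π ε (t ++ [α]) (u ++ α :: (v ++ w)) → RL π ε (t ++ [α]) (u ++ α :: (w ++ v)) := by
  induction w using List.reverseRecOn with
  | nil => intro v h; simpa using h
  | append_singleton w β ih =>
    intro v h
    have h1 := RL.right1 (v := v ++ w) (β := β) (by simpa using h)
    have h2 := ih (v := β :: v) (by simpa using h1)
    simpa using h2

theorem RL.left {π : RPair A} {ε : Bool} {α : A} {t u : List A} (v : List A) : ∀ {w : List A},
    RL π ε (α :: t) (v ++ w ++ α :: u) → RL π ε (α :: t) (w ++ v ++ α :: u) := by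
  induction v with
  | nil => intro w h; simpa using h
  | cons β v ih =>
    intro w h
    have h1 := RL.left1 (v := v ++ w) (β := β) (by simpa using h)
    have h2 := ih (w := w ++ [β]) (by simpa using h1)
    simpa using h2

theorem RL.refl {π : RPair A} {ε T B} (h : IsP π ε T B) : RL π ε T B :=
  ⟨π, h, Relation.ReflTransGen.refl⟩

theorem mem_of_RL {π π' : RPair A} {ε T B} (h : RL π ε T B) (h' : IsP π' ε T B) : π' ∈ EClass π := by
  obtain ⟨π'', h1, h2⟩ := h
  rw [h'.uniq h1]; exact h2

theorem E_trans {π π' π'' : RPair A} (h : π' ∈ EClass π) (h' : π'' ∈ EClass π') : π'' ∈ EClass π :=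
  Relation.ReflTransGen.trans h h'

theorem E_symm {π π' : RPair A} (h : π' ∈ EClass π) : π ∈ EClass π' := by
  induction h with
  | refl => exact Relation.ReflTransGen.refl
  | tail _ h ih =>
    refine E_trans ?_ ih
    rcases h with h | h
    · obtain ⟨ε, α, β, t, u, v, h1, h2⟩ := lists_of_right h
      refine mem_of_RL ?_ h1
      have := RL.right (v := [β]) v (RL.refl h2)
      exact this
    · rcases lists_of_left h with h | ⟨ε, α, β, t, u, v, h1, h2⟩
      · rw [h]; exact Relation.ReflTransGen.refl
      refine mem_of_RL ?_ h1
      have := RL.left (w := [β]) v (RL.refl (by simpa using h2))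
      simpa using this

theorem E_rename {π π' : RPair A} (ν : Perm A) (h : π' ∈ EClass π) :
    pairRename π' ν ∈ EClass (pairRename π ν) := by
  induction h with
  | refl => exact Relation.ReflTransGen.refl
  | tail _ h ih =>
    refine E_trans ih ?_
    rcases h with h | h
    · obtain ⟨ε, α, β, t, u, v, h1, h2⟩ := lists_of_right h
      refine mem_of_RL ?_ (h2.rename ν)
      have := RL.right (v := v.map ν.symm) [ν.symm β] (α := ν.symm α) (u := u.map ν.symm) (t := t.map ν.symm) (RL.refl (by simpa using h1.rename ν))
      simpa using this
    · rcases lists_of_left h with h | ⟨ε, α, β, t, u, v, h1, h2⟩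
      · rw [h]; exact Relation.ReflTransGen.refl
      refine mem_of_RL ?_ (h2.rename ν)
      have := RL.left (w := v.map ν.symm) [ν.symm β] (α := ν.symm α) (u := u.map ν.symm) (t := t.map ν.symm) (RL.refl (by simpa using h1.rename ν))
      simpa using this

theorem pairRename_mul (π : RPair A) (μ ν : Perm A) : pairRename (pairRename π μ) ν = pairRename π (μ * ν) := by
  funext ε; ext b; rfl

theorem pairRename_one (π : RPair A) : pairRename π 1 = π := by
  funext ε; ext b; rfl

def GG (π : RPair A) : Subgroup (Perm A) where
  carrier := renamings π
  one_mem' := by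
    change pairRename π 1 ∈ EClass π
    rw [pairRename_one]; exact Relation.ReflTransGen.refl
  mul_mem' := by
    intro a b ha hb
    change pairRename π (a * b) ∈ EClass π
    rw [← pairRename_mul]
    exact E_trans hb (E_rename b ha)
  inv_mem' := by
    intro a ha
    change pairRename π a⁻¹ ∈ EClass π
    have := E_rename a⁻¹ ha
    rw [pairRename_mul, mul_inv_cancel, pairRename_one] at this
    exact E_symm this

theorem mem_GG {π : RPair A} {ν : Perm A} : ν ∈ GG π ↔ pairRename π ν ∈ EClass π := Iff.rfl

/-- if `π'` and its renaming are both reachable, the renaming is in `G`. -/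
theorem mem_GG_of {π π' : RPair A} {μ ν : Perm A} (h1 : pairRename π' μ ∈ EClass π)
    (h2 : pairRename π' ν ∈ EClass π) : μ⁻¹ * ν ∈ GG π := by
  rw [mem_GG]
  have h3 := E_rename (μ⁻¹ * ν) (E_symm h1)
  rw [pairRename_mul, mul_inv_cancel_left] at h3
  exact E_trans h2 h3

theorem GG_eq {π π' : RPair A} (h : π' ∈ EClass π) : GG π' = GG π := by
  ext ν
  rw [mem_GG, mem_GG]
  constructor
  · intro h1
    exact E_trans (E_trans h h1) (E_rename ν (E_symm h))
  · intro h1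
    exact E_trans (E_symm h) (E_trans h1 (E_rename ν h))

def IrrL (T B : List A) : Prop := ∀ p q r s : List A, T = p ++ q → B = r ++ s → p.Perm r → p ≠ [] → q = []

theorem IrrL.swap {T B : List A} (h : IrrL T B) (hl : T.length = B.length) : IrrL B T := by
  intro p q r s h1 h2 h3 h4
  have := h r s p q h2 h1 h3.symm (by rintro rfl; simp at h3; exact h4 h3)
  subst this
  have := h3.length_eq
  rw [h1, h2] at hl
  simp at hl
  exact List.eq_nil_of_length_eq_zero (by omega)

theorem irrL_of {π : RPair A} (h : PairIrreducible π) : IrrL (toL (π false)) (toL (π true)) := by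
  intro p q r s h1 h2 h3 h4
  have hl1 := toL_length (π false)
  have hl := h3.length_eq
  rw [h1] at hl1; simp at hl1
  have hp : 0 < p.length := List.length_pos_iff.2 h4
  have := h ⟨p.length - 1, by omega⟩ ?_
  · simp only at this
    exact List.eq_nil_of_length_eq_zero (by omega)
  · intro x hx
    rw [Fin.le_def] at hx ⊢
    simp only at hx ⊢
    have hxp : x ∈ p := by
      have := mem_toL (π false) x
      rw [h1, List.mem_append] at this
      rcases this with h | h
      · exact h
      · obtain ⟨u, v, rfl⟩ := List.append_of_mem h
        have := toL_pos (u := p ++ u) (v := v) (a := x) (e := π false) (by rw [h1]; simp)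
        simp at this
        omega
    obtain ⟨u, v, rfl⟩ := List.append_of_mem (h3.mem_iff.1 hxp)
    have := toL_pos (u := u) (v := v ++ s) (a := x) (e := π true) (by rw [h2]; simp)
    simp at hl
    omega

theorem irr_of_irrL {π : RPair A} (h : IrrL (toL (π false)) (toL (π true))) : PairIrreducible π := by
  intro k hk
  set T := toL (π false) with hT
  set B := toL (π true) with hB
  have hlT : T.length = Fintype.card A := toL_length _
  have hlB : B.length = Fintype.card A := toL_length _
  have hkl := k.isLt
  have := h (T.take (k+1)) (T.drop (k+1)) (B.take (k+1)) (B.drop (k+1)) (by simp) (by simp) ?_ ?_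
  · rw [List.drop_eq_nil_iff] at this; omega
  · apply List.Subperm.perm_of_length_le
    · apply List.subperm_of_subset
      · exact (toL_nodup _).sublist (List.take_sublist _ _)
      · intro x hx
        rw [List.mem_take_iff_getElem] at hx
        obtain ⟨i, hi, rfl⟩ := hx
        have h1 := hk T[i] (by
          simp only [hT]; rw [toL_get, Equiv.apply_symm_apply, Fin.le_def]; simp only; omega)
        obtain ⟨u, v, huv⟩ := toL_split (π true) T[i]
        have h2 := toL_pos huv
        rw [Fin.le_def] at h1
        rw [List.mem_take_iff_getElem]
        refine ⟨u.length, ?_, ?_⟩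
        · rw [hlB]; omega
        · simp only [hB, huv]; simp
    · simp [hlT, hlB]
  · intro h0
    have := congrArg List.length h0
    simp [hlT] at this

theorem IrrL.rot {t u y y' : List A} {α : A} (h : IrrL (t ++ [α]) (u ++ α :: y))
    (hn : (t ++ [α]).Nodup) : IrrL (t ++ [α]) (u ++ α :: y') := by
  intro p q r s h1 h2 h3 h4
  by_contra hq
  obtain ⟨q', c, rfl⟩ := (List.eq_nil_or_concat q).resolve_left hq
  have hαp : α ∉ p := by
    have : t ++ [α] = (p ++ q') ++ [c] := by rw [h1]; simp
    obtain ⟨rfl, h6⟩ := List.append_inj' this rfl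
    intro h7
    rw [List.nodup_append] at hn
    exact hn.2.2 α (by simp [h7]) α (by simp) rfl
  have hαr : α ∉ r := fun h => hαp (h3.mem_iff.2 h)
  rw [List.append_eq_append_iff] at h2
  rcases h2 with ⟨as, h5, h6⟩ | ⟨as, h5, h6⟩
  · cases as with
    | nil => 
      simp at h5
      exact hq (h p _ r (α :: y) h1 (by rw [h5]) h3 h4)
    | cons d as =>
      simp at h6
      exact hαr (by rw [h5, h6.1]; simp)
  · exact hq (h p _ r (as ++ α :: y) h1 (by rw [h5]; simp) h3 h4)

def RR (π : RPair A) (ε : Bool) (T B : List A) : Prop := RL π ε T B ∧ IrrL T B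

theorem RL.nodup {π : RPair A} {ε T B} (h : RL π ε T B) : T.Nodup := by
  obtain ⟨π', h1, -⟩ := h
  rw [← h1.1]; exact toL_nodup _
theorem RL.mem {π : RPair A} {ε T B} (h : RL π ε T B) (a : A) : a ∈ T := by
  obtain ⟨π', h1, -⟩ := h
  rw [← h1.1]; exact mem_toL _ _
theorem RL.length {π : RPair A} {ε T B} (h : RL π ε T B) : T.length = Fintype.card A := by
  obtain ⟨π', h1, -⟩ := h
  rw [← h1.1]; exact toL_length _

theorem RR.right {π : RPair A} {ε : Bool} {α : A} {t u v w : List A}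
    (h : RR π ε (t ++ [α]) (u ++ α :: (v ++ w))) : RR π ε (t ++ [α]) (u ++ α :: (w ++ v)) :=
  ⟨RL.right w h.1, h.2.rot h.1.nodup⟩

theorem RR.swap {π : RPair A} {ε T B} (h : RR π ε T B) : RR π (!ε) B T :=
  ⟨h.1.swap, h.2.swap (h.1.length.trans h.1.swap.length.symm)⟩

theorem exists_standard (hN : 2 ≤ Fintype.card A) {π : RPair A} (hπ : PairIrreducible π) :
    ∃ a z W V, RR π false (a :: (W ++ [z])) (z :: (V ++ [a])) := by
  classical
  suffices ∃ ε a z W V, RR π ε (a :: (W ++ [z])) (z :: (V ++ [a])) by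
    obtain ⟨ε, a, z, W, V, h⟩ := this
    cases ε with
    | false => exact ⟨_, _, _, _, h⟩
    | true => exact ⟨_, _, _, _, h.swap⟩
  let P : ℕ → Prop := fun m => ∃ ε t α u y, RR π ε (t ++ [α]) (u ++ α :: y) ∧ u.length = m
  have hP : ∃ m, P m := by
    have h0 : RR π false (toL (π false)) (toL (π true)) := ⟨RL.refl (isP_self π false), irrL_of hπ⟩
    have hne : toL (π false) ≠ [] := by
      intro h; have := toL_length (π false); rw [h] at this; simp at this; omega
    obtain ⟨t, α, ht⟩ := (List.eq_nil_or_concat _).resolve_left hne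
    obtain ⟨u, y, huy⟩ := toL_split (π true) α
    refine ⟨u.length, false, t, α, u, y, ?_, rfl⟩
    rw [ht, huy] at h0; simpa using h0
  obtain ⟨ε, t, α, u, y, h, hm⟩ := Nat.find_spec hP
  have hmin : ∀ m, P m → u.length ≤ m := by
    intro m h; rw [hm]; exact Nat.find_min' hP h
  have hlT := h.1.length
  have hlB := h.1.swap.length
  have hnB := h.1.swap.nodup
  have hnT := h.1.nodup
  cases u with
  | nil =>
    cases t with
    | nil => simp at hlT; omega
    | cons a t' =>
      have ha : a ∈ y := by
        have := h.1.swap.mem a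
        have hne : a ≠ α := by rintro rfl; simp at hnT
        simpa [hne] using this
      obtain ⟨v, w, rfl⟩ := List.append_of_mem ha
      have h2 := RR.right (t := a :: t') (u := []) (α := α) (v := v ++ [a]) (w := w) (by simpa using h)
      exact ⟨ε, a, α, t', w ++ v, by simpa using h2⟩
  | cons c0 u' =>
    exfalso
    set u := c0 :: u' with hu
    have hy : ∀ c ∈ y, c ∉ t.take u.length := by
      intro c hc
      obtain ⟨v, w, rfl⟩ := List.append_of_mem hc
      have h2 := RR.right (v := v ++ [c]) (w := w) (by simpa using h)
      have hct : c ∈ t := by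
        have := h.1.mem c
        have hne : c ≠ α := by
          rintro rfl
          simp [List.nodup_append] at hnB
        simpa [hne] using this
      obtain ⟨t1, t2, rfl⟩ := List.append_of_mem hct
      have h3 := hmin t1.length ⟨!ε, u ++ α :: (w ++ v), c, t1, t2 ++ [α], by simpa using h2.swap, rfl⟩
      intro hc2
      rw [List.take_append_of_le_length h3] at hc2
      have hc3 := List.mem_of_mem_take hc2
      simp only [List.nodup_append, List.append_assoc] at hnT
      exact hnT.2.2 c hc3 c (by simp) rfl
    simp at hlT hlB
    have hsub : (t.take u.length).Perm u := by
      apply List.Subperm.perm_of_length_le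
      · apply List.subperm_of_subset
        · exact ((List.nodup_append.1 hnT).1).sublist (List.take_sublist _ _)
        · intro x hx
          have h1 := h.1.swap.mem x
          have hxt := List.mem_of_mem_take hx
          have hne : x ≠ α := by
            rintro rfl
            exact (List.nodup_append.1 hnT).2.2 _ hxt _ (by simp) rfl
          rw [List.mem_append] at h1
          rcases h1 with h1 | h1
          · exact h1
          rcases List.mem_cons.1 h1 with h1 | h1
          · exact absurd h1 hne
          · exact absurd hx (hy x h1)
      · rw [List.length_take]; simp; omega
    have := h.2 (t.take u.length) (t.drop u.length ++ [α]) u (α :: y) (by rw [← List.append_assoc, List.take_append_drop]) rfl hsub ?_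
    · simp at this
    · intro h0; rw [h0] at hsub; simp [hu] at hsub

theorem RL.rotB {π : RPair A} {ε : Bool} {z : A} {P U1 U2 : List A} (h : RL π ε (P ++ [z]) (z :: (U1 ++ U2))) :
    RL π ε (P ++ [z]) (z :: (U2 ++ U1)) := RL.right (u := []) U2 h

theorem RL.rotT {π : RPair A} {ε : Bool} {z : A} {P1 P2 U : List A} (h : RL π ε (P1 ++ P2 ++ [z]) (z :: U)) :
    RL π ε (P2 ++ P1 ++ [z]) (z :: U) := RL.swap' (RL.left P1 h.swap)

theorem three_mem [DecidableEq A] {π : RPair A} {z : A} {P U : List A} (h : RL π false (P ++ [z]) (z :: U))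
    {x y : A} (hx : x ≠ z) (hy : y ≠ z) (hxy : x ≠ y) : swap x z * swap y z ∈ GG π := by
  have hxP : x ∈ P := by simpa [hx] using h.mem x
  have hxU : x ∈ U := by simpa [hx] using h.swap.mem x
  obtain ⟨P1, P2, rfl⟩ := List.append_of_mem hxP
  obtain ⟨U1, U2, rfl⟩ := List.append_of_mem hxU
  have h1 := RL.rotT h
  have h2 := RL.rotB (P := x :: P2 ++ P1) (z := z) (U1 := U1 ++ [x]) (U2 := U2) (by simpa using h1)
  have h3 : RL π false (x :: (P2 ++ P1) ++ [z]) (z :: ((U2 ++ U1) ++ [x])) := by simpa using h2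
  clear h h1 h2 hxP hxU
  generalize P2 ++ P1 = W at h3
  generalize U2 ++ U1 = V at h3
  have hyW : y ∈ W := by simpa [hxy.symm, hy] using h3.mem y
  have hyV : y ∈ V := by simpa [hxy.symm, hy] using h3.swap.mem y
  obtain ⟨W1, W2, rfl⟩ := List.append_of_mem hyW
  obtain ⟨V1, V2, rfl⟩ := List.append_of_mem hyV
  have h4 := RL.left (α := x) (t := W1 ++ y :: W2 ++ [z]) (u := []) (z :: V1) (w := y :: V2) (by simpa using h3)
  have h5 := RL.right (α := x) (u := []) (t := y :: V2 ++ z :: V1) (v := W1 ++ [y]) (w := W2 ++ [z]) (by simpa using h4.swap)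
  have h6 : RL π false ((x :: W2) ++ (z :: W1) ++ [y]) (y :: ((V2 ++ [z]) ++ (V1 ++ [x]))) := RL.swap' (by simpa using h5)
  have h7 := RL.rotB (RL.rotT h6)
  set c := swap x z * swap y z with hc
  have cx : c x = z := by
    rw [hc, Perm.mul_apply, swap_apply_of_ne_of_ne hxy hx, swap_apply_left]
  have cz : c z = y := by
    rw [hc, Perm.mul_apply, swap_apply_right, swap_apply_of_ne_of_ne hxy.symm hy]
  have cy : c y = x := by
    rw [hc, Perm.mul_apply, swap_apply_left, swap_apply_right]
  have hother : ∀ L : List A, x ∉ L → y ∉ L → z ∉ L → L.map c = L := by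
    intro L h1 h2 h3
    refine Eq.trans (List.map_congr_left (g := id) ?_) (List.map_id L)
    intro a ha
    have a1 : a ≠ x := fun h => h1 (h ▸ ha)
    have a2 : a ≠ y := fun h => h2 (h ▸ ha)
    have a3 : a ≠ z := fun h => h3 (h ▸ ha)
    rw [hc, Perm.mul_apply, swap_apply_of_ne_of_ne a2 a3, swap_apply_of_ne_of_ne a1 a3]; rfl
  have hn1 := h3.nodup
  have hn2 := h3.swap.nodup
  have e1 : W1.map c = W1 := by apply hother <;> grind [List.nodup_append]
  have e2 : W2.map c = W2 := by apply hother <;> grind [List.nodup_append]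
  have e3 : V1.map c = V1 := by apply hother <;> grind [List.nodup_append]
  have e4 : V2.map c = V2 := by apply hother <;> grind [List.nodup_append]
  obtain ⟨ρ, hρ, hρE⟩ := h3
  have hr := hρ.rename c⁻¹
  have key : pairRename ρ c⁻¹ ∈ EClass π := by
    refine mem_of_RL h7 ?_
    convert hr using 1
    · change _ = List.map c _
      simp [e1, e2, cx, cy, cz]
    · change _ = List.map c _
      simp [e3, e4, cx, cy, cz]
  have := mem_GG_of (π' := ρ) (μ := 1) (by rw [pairRename_one]; exact hρE) key
  simpa using this

theorem alt_le_of [DecidableEq A] (K : Subgroup (Perm A)) (z : A)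
    (h : ∀ x y, x ≠ z → y ≠ z → x ≠ y → swap x z * swap y z ∈ K) : alternatingGroup A ≤ K := by
  have h' : ∀ x y, x ≠ z → y ≠ z → swap x z * swap y z ∈ K := by
    intro x y hx hy
    by_cases hxy : x = y
    · subst hxy; simp [K.one_mem]
    · exact h x y hx hy hxy
  have key : ∀ σ : Perm A, (Perm.sign σ = 1 → σ ∈ K) ∧ (Perm.sign σ = -1 → ∀ x, x ≠ z → swap x z * σ ∈ K) := by
    intro σ
    induction σ using Perm.swap_induction_on with
    | one => exact ⟨fun _ => K.one_mem, fun h => by simp at h⟩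
    | swap_mul σ a b hab ih =>
      have hz : ∀ b, b ≠ z → (Perm.sign (swap b z * σ) = 1 → swap b z * σ ∈ K) ∧
          (Perm.sign (swap b z * σ) = -1 → ∀ x, x ≠ z → swap x z * (swap b z * σ) ∈ K) := by
        intro b hb
        rw [Perm.sign_mul, Perm.sign_swap hb]
        constructor
        · intro h1; exact ih.2 (by simpa [neg_eq_iff_eq_neg] using h1) b hb
        · intro h1 x hx
          rw [← mul_assoc]
          exact K.mul_mem (h' x b hx hb) (ih.1 (by simpa using h1))
      by_cases ha : a = z
      · subst ha
        rw [swap_comm]; exact hz b hab.symm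
      by_cases hb : b = z
      · subst hb; exact hz a hab
      have e : swap a b = swap a z * swap b z * swap a z := by
        rw [swap_comm a z]; exact (swap_mul_swap_mul_swap hb hab.symm).symm
      rw [Perm.sign_mul, Perm.sign_swap hab, e]
      constructor
      · intro h1
        rw [mul_assoc]
        exact K.mul_mem (h' a b ha hb) (ih.2 (by simpa [neg_eq_iff_eq_neg] using h1) a ha)
      · intro h1 x hx
        have : swap x z * (swap a z * swap b z * swap a z * σ) = (swap x z * swap a z) * (swap b z * swap a z) * σ := by
          simp only [mul_assoc]
        rw [this]
        exact K.mul_mem (K.mul_mem (h' x a hx ha) (h' b a hb ha)) (ih.1 (by simpa using h1))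
  intro σ hσ
  exact (key σ).1 (Perm.mem_alternatingGroup.1 hσ)

theorem alt_le_GG [DecidableEq A] {π : RPair A} {z : A} {P U : List A} (h : RL π false (P ++ [z]) (z :: U)) :
    alternatingGroup A ≤ GG π := alt_le_of _ z (fun _ _ hx hy hxy => three_mem h hx hy hxy)

theorem GG_top_of_odd [DecidableEq A] {π : RPair A} (h : alternatingGroup A ≤ GG π) {ν : Perm A} (hν : ν ∈ GG π)
    (hs : Perm.sign ν = -1) : GG π = ⊤ := by
  rw [eq_top_iff]
  intro σ _
  rcases Int.units_eq_one_or (Perm.sign σ) with h1 | h1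
  · exact h (Perm.mem_alternatingGroup.2 h1)
  · have : σ * ν⁻¹ ∈ GG π := h (Perm.mem_alternatingGroup.2 (by simp [h1, hs]))
    simpa using (GG π).mul_mem this hν

def IsPer {A : Type*} (σ : Perm A) (y : A) (k : ℕ) : Prop :=
  0 < k ∧ (σ ^ k) y = y ∧ ∀ i, 0 < i → i < k → (σ ^ i) y ≠ y

theorem IsPer.sameCycle {A : Type*} {σ : Perm A} {y x : A} {k : ℕ} (h : IsPer σ y k)
    (hs : σ.SameCycle y x) : IsPer σ x k := by
  obtain ⟨n, rfl⟩ := hs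
  refine ⟨h.1, ?_, ?_⟩
  · rw [← Perm.mul_apply, ← zpow_natCast, ← zpow_add, add_comm, zpow_add, Perm.mul_apply, zpow_natCast, h.2.1]
  · intro i h1 h2 h3
    apply h.2.2 i h1 h2
    rw [← Perm.mul_apply, ← zpow_natCast, ← zpow_add, add_comm, zpow_add, Perm.mul_apply, zpow_natCast] at h3
    exact (σ ^ n).injective h3

theorem IsPer.uniq {A : Type*} {σ : Perm A} {y : A} {k l : ℕ} (h : IsPer σ y k) (h' : IsPer σ y l) : k = l := by
  rcases lt_trichotomy k l with h1 | h1 | h1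
  · exact absurd h.2.1 (h'.2.2 k h.1 h1)
  · exact h1
  · exact absurd h'.2.1 (h.2.2 l h'.1 h1)

theorem IsPer.pow_ne {A : Type*} {σ : Perm A} {y : A} {k i j : ℕ} (h : IsPer σ y k) (h1 : i < j) (h2 : j < k) :
    (σ ^ i) y ≠ (σ ^ j) y := by
  intro h3
  apply h.2.2 (j - i) (by omega) (by omega)
  have : (σ ^ j) y = (σ ^ i) ((σ ^ (j - i)) y) := by
    rw [← Perm.mul_apply, ← pow_add]; congr 2; omega
  rw [this] at h3
  exact ((σ ^ i).injective h3).symm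

theorem papp {A : Type*} (f : Perm A) (n : ℕ) (b : A) : f ((f ^ n) b) = (f ^ (n+1)) b := by
  rw [pow_succ', Perm.mul_apply]

theorem odd_main {A : Type*} [Fintype A] [DecidableEq A] (R : ℤˣ → Perm A → Perm A → Prop)
    (hR : ∀ s c0 c1 w, R s c0 c1 → c0 w ≠ w →
      R (-s) (swap w (c0 w) * c0 * swap w (c1⁻¹ w)) (swap w (c0 w) * c1 * swap w (c1⁻¹ w))) :
    ∀ (d : ℕ) (c0 c1 : Perm A) (s : ℤˣ) (y : A) (k : ℕ), R s c0 c1 → IsPer (c0⁻¹ * c1) y k →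
      IsPer (c0⁻¹ * c1) ((c0 ^ d) y) k → ¬ (c0⁻¹ * c1).SameCycle y ((c0 ^ d) y) →
      ∃ s c0 c1, R s c0 c1 ∧ R (-s) c0 c1 := by
  intro d
  induction d with
  | zero => intro c0 c1 s y k _ _ _ h; exact absurd (Perm.SameCycle.refl _ _) h
  | succ d ih =>
    intro c0 c1 s y k hs hy hx hyx
    have hxe : (c0 ^ (d+1)) y = (c0 ^ d) (c0 y) := by rw [pow_succ, Perm.mul_apply]
    rw [hxe] at hx hyx
    set x := (c0 ^ d) (c0 y) with hxdef
    set w := c0 y with hw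
    set σ := c0⁻¹ * c1 with hσ
    by_cases hyw : σ.SameCycle y w
    · exact ih c0 c1 s w k hs (hy.sameCycle hyw) hx (fun h => hyx (hyw.trans h))
    have hywne : y ≠ w := fun h => hyw (h ▸ Perm.SameCycle.refl _ _)
    set l := c1⁻¹ w with hl
    have hσl : σ l = y := by simp [hσ, hl, hw]
    have hyl : σ.SameCycle y l := by
      rw [← hσl]; exact (Perm.sameCycle_apply_left).2 (Perm.SameCycle.refl _ _)
    have hlw : l ≠ w := fun h => hyw (h ▸ hyl)
    set d0 := c0 * swap w y with hd0
    set d1 := c1 * swap w l with hd1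
    have hc0 : c0 = d0 * swap w y := by simp [hd0]
    have hc1 : c1 = d1 * swap w l := by simp [hd1]
    have hd0w : d0 w = w := by simp [hd0, hw]
    have hd1w : d1 w = w := by simp [hd1, hl]
    set δ := d0⁻¹ * d1 with hδ
    have hδσ : δ = swap w y * σ * swap w l := by
      simp [hδ, hσ, hd0, hd1, mul_assoc]
    have hδw : δ w = w := by
      rw [hδ, Perm.mul_apply, hd1w, Perm.inv_eq_iff_eq, hd0w]
    have hδb : ∀ b, δ b = swap w y (σ (swap w l b)) := fun b => by rw [hδσ]; rfl
    have hδpw : ∀ n : ℕ, (δ ^ n) w = w := fun n => by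
      induction n with
      | zero => rfl
      | succ n ih => rw [pow_succ, Perm.mul_apply, hδw, ih]
    -- the step
    let K : ℤˣ → A → A → Prop := fun s y l => R s (d0 * swap w y) (d1 * swap w l)
    have hK : ∀ s y l, y ≠ w → l ≠ w → K s y l → K (-s) l (δ⁻¹ y) := by
      intro s y l hy hl h
      have h1 : (d0 * swap w y) w = d0 y := by simp
      have h2 : (d1 * swap w l)⁻¹ w = l := by
        rw [Perm.inv_eq_iff_eq]; simp [hd1w]
      have h3 := hR _ _ _ w h (by
        rw [h1]; intro h4; apply hy; apply d0.injective; rw [h4, hd0w])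
      rw [h1, h2] at h3
      have e1 : swap w (d0 y) * d0 = d0 * swap w y := by
        conv_lhs => rw [← hd0w]
        rw [swap_apply_apply]; simp [hd0w]
      have e2 : swap w (d0 y) * d1 = d1 * swap w (δ⁻¹ y) := by
        have : swap w (d0 y) = swap (d1 w) (d1 (δ⁻¹ y)) := by
          rw [hd1w]; congr 1; simp [hδ]
        rw [this, swap_apply_apply]; simp
      have e3 : swap w (d0 y) * (d0 * swap w y) * swap w l = d0 * swap w l := by
        rw [← mul_assoc, e1]; simp
      have e4 : swap w (d0 y) * (d1 * swap w l) * swap w l = d1 * swap w (δ⁻¹ y) := by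
        rw [← e2]; simp [mul_assoc]
      rw [e3, e4] at h3
      exact h3
    have hinv : ∀ b, b ≠ w → δ⁻¹ b ≠ w := by
      intro b hb h; apply hb; rw [Perm.inv_eq_iff_eq] at h; rw [h, hδw]
    have hKr : ∀ r : ℕ, ∀ y l, y ≠ w → l ≠ w → K s y l → K (-s) (((δ⁻¹) ^ r) l) (((δ⁻¹) ^ (r+1)) y) := by
      intro r
      induction r with
      | zero => intro y l h1 h2 h3; simpa using hK s y l h1 h2 h3
      | succ r ihr =>
        intro y l h1 h2 h3
        have h4 := hK _ _ _ h2 (hinv _ h1) (hK s y l h1 h2 h3)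
        rw [neg_neg] at h4
        have h5 := ihr _ _ (hinv _ h1) (hinv _ h2) h4
        rw [← Perm.mul_apply, ← pow_succ, ← Perm.mul_apply, ← pow_succ] at h5
        exact h5
    have hK0 : K s y l := by
      change R s _ _
      rw [← hc0, ← hc1]; exact hs
    -- powers
    have hσk : (σ ^ (k-1)) y = l := by
      apply σ.injective
      rw [← Perm.mul_apply, ← pow_succ', Nat.sub_add_cancel hy.1, hy.2.1, hσl]
    have hcyc : ∀ n : ℕ, (σ ^ n) y ≠ w := fun n h => hyw ⟨n, by rw [zpow_natCast]; exact h⟩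
    have hpow : ∀ i, i < k → (δ ^ i) y = (σ ^ i) y := by
      intro i
      induction i with
      | zero => intro _; rfl
      | succ i ihi =>
        intro hi
        rw [pow_succ', Perm.mul_apply, ihi (by omega), hδb, swap_apply_of_ne_of_ne (hcyc i) (by
          rw [← hσk]; exact hy.pow_ne (by omega) (by omega)), papp,
          swap_apply_of_ne_of_ne (hcyc _) (hy.2.2 _ (by omega) hi)]
    have hδl : (δ ^ (k-1)) y = l := by rw [hpow _ (by have := hy.1; omega), hσk]
    have hback : ((δ⁻¹) ^ (k-1)) l = y := by
      rw [← hδl, inv_pow]; simp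
    have hfin := hKr (k-1) y l hywne hlw hK0
    rw [hback, Nat.sub_add_cancel hy.1] at hfin
    by_cases hwx : σ.SameCycle w x
    · -- same cycle
      have hwk : IsPer σ w k := hx.sameCycle hwx.symm
      have hwy : ∀ n : ℕ, (σ ^ n) w ≠ y := fun n h => hyw (Perm.SameCycle.symm ⟨n, by rw [zpow_natCast]; exact h⟩)
      have hwl : ∀ n : ℕ, (σ ^ n) w ≠ l := fun n h => hyw (hyl.trans (Perm.SameCycle.symm ⟨n, by rw [zpow_natCast]; exact h⟩))
      have hq : ∀ j, j < k → (δ ^ (j+1)) l = swap w y ((σ ^ (j+1)) w) := by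
        intro j
        induction j with
        | zero => intro _; simp [hδb]
        | succ j ihj =>
          intro hj
          rw [pow_succ', Perm.mul_apply, ihj (by omega), swap_apply_of_ne_of_ne (hwk.2.2 _ (by omega) hj) (hwy _),
            hδb, swap_apply_of_ne_of_ne (hwk.2.2 _ (by omega) hj) (hwl _), papp]
      have hq1 := hq (k-1) (by have := hy.1; omega)
      rw [Nat.sub_add_cancel hy.1, hwk.2.1, swap_apply_left] at hq1
      have : ((δ⁻¹) ^ k) y = l := by rw [← hq1, inv_pow]; simp
      rw [this] at hfin
      exact ⟨s, _, _, hK0, hfin⟩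
    · -- general step
      set l2 := ((δ⁻¹) ^ k) y with hl2
      have hl2k : (δ ^ k) l2 = y := by rw [hl2, inv_pow]; simp
      have hR2 : R (-s) c0 (d1 * swap w l2) := by rw [hc0]; exact hfin
      have hσ2 : c0⁻¹ * (d1 * swap w l2) = swap w y * δ * swap w l2 := by
        rw [hc0, hδ]; simp [mul_assoc]
      set σ2 := swap w y * δ * swap w l2 with hσ2d
      have hσ2b : ∀ b, σ2 b = swap w y (δ (swap w l2 b)) := fun b => rfl
      have hcomm : ∀ i, (δ ^ i) l2 = ((δ⁻¹) ^ k) ((δ ^ i) y) := by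
        intro i
        rw [hl2, ← Perm.mul_apply, ← Perm.mul_apply]
        congr 1
        rw [inv_pow]
        exact ((Commute.refl δ).pow_pow i k).inv_right
      have hq : ∀ j, j < k → (σ2 ^ (j+1)) w = swap w y ((δ ^ (j+1)) l2) := by
        intro j
        induction j with
        | zero => intro _; simp [hσ2b]
        | succ j ihj =>
          intro hj
          have n1 : (δ ^ (j+1)) l2 ≠ w := by
            rw [← hδpw (j+1)]
            intro h
            have := (δ ^ (j+1)).injective h
            rw [this, hδpw] at hl2k
            exact hywne hl2k.symm
          have n2 : (δ ^ (j+1)) l2 ≠ l2 := by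
            rw [hcomm, hl2]
            intro h
            have := ((δ⁻¹) ^ k).injective h
            rw [hpow _ hj] at this
            exact hy.2.2 _ (by omega) hj this
          have n3 : (δ ^ (j+1)) l2 ≠ y := by
            intro h
            have h5 : (δ ^ (k - (j+1))) y = y := by
              conv_rhs => rw [← hl2k]
              rw [← h, ← Perm.mul_apply, ← pow_add]; congr 2; omega
            rw [hpow _ (by omega)] at h5
            exact hy.2.2 _ (by omega) (by omega) h5
          rw [pow_succ', Perm.mul_apply, ihj (by omega), swap_apply_of_ne_of_ne n1 n3, hσ2b,
            swap_apply_of_ne_of_ne n1 n2, papp]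
      have hper : IsPer σ2 w k := by
        refine ⟨hy.1, ?_, ?_⟩
        · have := hq (k-1) (by have := hy.1; omega)
          rw [Nat.sub_add_cancel hy.1, hl2k, swap_apply_right] at this
          exact this
        · intro i h1 h2 h3
          obtain ⟨j, rfl⟩ : ∃ j, i = j + 1 := ⟨i - 1, by omega⟩
          rw [hq j (by omega), swap_apply_eq_iff, swap_apply_left] at h3
          have h5 : (δ ^ (k - (j+1))) y = y := by
            conv_rhs => rw [← hl2k]
            rw [← h3, ← Perm.mul_apply, ← pow_add]; congr 2; omega
          rw [hpow _ (by omega)] at h5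
          exact hy.2.2 _ (by omega) (by omega) h5
      have hxw : ∀ n : ℕ, (σ ^ n) x ≠ w := fun n h => hwx (Perm.SameCycle.symm ⟨n, by rw [zpow_natCast]; exact h⟩)
      have hxy : ∀ n : ℕ, (σ ^ n) x ≠ y := fun n h => hyx (Perm.SameCycle.symm ⟨n, by rw [zpow_natCast]; exact h⟩)
      have hxl : ∀ n : ℕ, (σ ^ n) x ≠ l := fun n h => by
        apply hxy (n+1); rw [pow_succ', Perm.mul_apply, h, hσl]
      have hδx : ∀ n m : ℕ, (δ ^ m) ((σ ^ n) x) = (σ ^ (n+m)) x := by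
        intro n m
        induction m with
        | zero => rfl
        | succ m ihm =>
          rw [pow_succ', Perm.mul_apply, ihm, hδb, swap_apply_of_ne_of_ne (hxw _) (hxl _), papp, swap_apply_of_ne_of_ne (hxw _) (hxy _)]; rfl
      have hxl2 : ∀ n : ℕ, (σ ^ n) x ≠ l2 := fun n h => by
        apply hxy (n+k); rw [← hδx, h, hl2k]
      have hσ2x : ∀ n : ℕ, (σ2 ^ n) x = (σ ^ n) x := by
        intro n
        induction n with
        | zero => rfl
        | succ n ihn =>
          rw [pow_succ', Perm.mul_apply, ihn, hσ2b, swap_apply_of_ne_of_ne (hxw _) (hxl2 _)]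
          have := hδx n 1
          rw [pow_one] at this
          rw [this, swap_apply_of_ne_of_ne (hxw _) (hxy _)]
      have hperx : IsPer σ2 x k := by
        refine ⟨hx.1, ?_, ?_⟩
        · rw [hσ2x, hx.2.1]
        · intro i h1 h2; rw [hσ2x]; exact hx.2.2 i h1 h2
      refine ih c0 (d1 * swap w l2) (-s) w k hR2 ?_ ?_ ?_
      · rw [hσ2]; exact hper
      · rw [hσ2]; exact hperx
      · rw [hσ2]
        intro h
        obtain ⟨n, -, hn⟩ := h.symm.exists_pow_eq'
        rw [hσ2x] at hn
        exact hxw n hn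

theorem RL.rename {π : RPair A} {ε T B} (h : RL π ε T B) (ν : Perm A) :
    RL (pairRename π ν) ε (T.map ν.symm) (B.map ν.symm) := by
  obtain ⟨ρ, h1, h2⟩ := h
  exact ⟨_, h1.rename ν, E_rename ν h2⟩

theorem RL.rotated {π : RPair A} {ε : Bool} {z : A} {P P' U U' : List A} (h : RL π ε (P ++ [z]) (z :: U))
    (hP : P.IsRotated P') (hU : U.IsRotated U') : RL π ε (P' ++ [z]) (z :: U') := by
  obtain ⟨n, rfl⟩ := hP
  obtain ⟨m, rfl⟩ := hU
  rw [List.rotate_eq_drop_append_take_mod, List.rotate_eq_drop_append_take_mod]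
  apply RL.rotB
  apply RL.rotT
  simpa using h

theorem formPerm_map_perm [DecidableEq A] (f : Perm A) : ∀ L : List A, (L.map f).formPerm = f * L.formPerm * f⁻¹
  | [] => by simp
  | [x] => by simp
  | x :: y :: l => by
    have ih := formPerm_map_perm f (y :: l)
    simp only [List.map_cons] at ih ⊢
    rw [List.formPerm_cons_cons, ih, List.formPerm_cons_cons, swap_apply_apply]
    simp [mul_assoc]

def RS [DecidableEq A] (π : RPair A) (z : A) (s : ℤˣ) (c0 c1 : Perm A) : Prop :=
  ∃ (P U : List A) (ν : Perm A), RL (pairRename π ν) false (P ++ [z]) (z :: U) ∧ P.formPerm = c0 ∧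
    U.formPerm = c1 ∧ Perm.sign ν = s

theorem Hmove [DecidableEq A] {π : RPair A} {z a l w : A} {W1 W2 V1 V2 : List A}
    (h : RL π false (a :: W1 ++ l :: W2 ++ [w] ++ [z]) (z :: (V1 ++ l :: w :: V2 ++ [a]))) :
    RL (pairRename π (swap z w)) false (a :: W1 ++ l :: w :: W2 ++ [z]) (z :: (V1 ++ l :: V2 ++ [w, a])) := by
  have hn1 := h.nodup
  have hn2 := h.swap.nodup
  simp only [List.nodup_append, List.nodup_cons, List.mem_append, List.mem_cons, List.cons_append] at hn1 hn2
  have hother : ∀ L : List A, w ∉ L → z ∉ L → L.map (swap z w) = L := by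
    intro L h1 h2
    refine Eq.trans (List.map_congr_left (g := id) ?_) (List.map_id L)
    intro b hb
    have a1 : b ≠ w := fun h => h1 (h ▸ hb)
    have a2 : b ≠ z := fun h => h2 (h ▸ hb)
    rw [swap_apply_of_ne_of_ne a2 a1]; rfl
  have e1 : W1.map (swap z w) = W1 := by apply hother <;> grind 
  have e2 : W2.map (swap z w) = W2 := by apply hother <;> grind 
  have e3 : V1.map (swap z w) = V1 := by apply hother <;> grind 
  have e4 : V2.map (swap z w) = V2 := by apply hother <;> grind 
  have e5 : swap z w a = a := swap_apply_of_ne_of_ne (by grind ) (by grind )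
  have e6 : swap z w l = l := swap_apply_of_ne_of_ne (by grind ) (by grind )
  have h1 := RL.rotB (P := a :: W1 ++ l :: W2 ++ [w]) (U1 := V1 ++ [l]) (U2 := w :: V2 ++ [a]) (by simpa using h)
  have h2 := RL.right (α := l) (t := z :: w :: V2 ++ a :: V1) (u := a :: W1) (v := W2 ++ [w]) [z] (by simpa using h1.swap)
  have h2' : RL π false (a :: W1 ++ l :: z :: W2 ++ [w]) ([z] ++ w :: (V2 ++ [a] ++ (V1 ++ [l]))) := by
    apply RL.swap'
    simpa using h2
  have h3 := RL.right (α := w) (u := [z]) (t := a :: W1 ++ l :: z :: W2) (v := V2 ++ [a]) (V1 ++ [l]) h2'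
  have h4 := RL.left (α := a) (t := W1 ++ l :: z :: W2 ++ [w]) (u := []) [z] (w := w :: V1 ++ l :: V2) (ε := false) (π := π) (by simpa using h3)
  have h5 := h4.rename (swap z w)
  simpa [e1, e2, e3, e4, e5, e6] using h5

theorem RS.step [DecidableEq A] {π : RPair A} {z : A} (s : ℤˣ) (c0 c1 : Perm A) (w : A) (h : RS π z s c0 c1)
    (hw : c0 w ≠ w) : RS π z (-s) (swap w (c0 w) * c0 * swap w (c1⁻¹ w)) (swap w (c0 w) * c1 * swap w (c1⁻¹ w)) := by
  obtain ⟨P, U, ν, h, rfl, rfl, hs⟩ := h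
  have hwP := List.mem_of_formPerm_apply_ne hw
  have hnP : P.Nodup := (List.nodup_append.1 h.nodup).1
  have hnU : U.Nodup := (List.nodup_cons.1 h.swap.nodup).2
  have hzP : z ∉ P := fun hz => (List.nodup_append.1 h.nodup).2.2 _ hz _ (by simp) rfl
  have hzU : z ∉ U := (List.nodup_cons.1 h.swap.nodup).1
  have hwz : w ≠ z := fun h => hzP (h ▸ hwP)
  have hwU : w ∈ U := by simpa [hwz] using h.swap.mem w
  -- rotate P
  obtain ⟨X, Y, hXY⟩ := List.append_of_mem hwP
  have hr : P.IsRotated (Y ++ X ++ [w]) := by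
    rw [hXY]; simpa using List.isRotated_append (l := X ++ [w]) (l' := Y)
  obtain ⟨X', Y', hXY'⟩ := List.append_of_mem hwU
  have hr' : U.IsRotated (Y' ++ X' ++ [w]) := by
    rw [hXY']; simpa using List.isRotated_append (l := X' ++ [w]) (l' := Y')
  generalize Y ++ X = P0 at hr
  generalize Y' ++ X' = U0 at hr'
  clear hXY hXY' X Y X' Y'
  cases P0 with
  | nil =>
    exfalso; apply hw; rw [List.formPerm_eq_of_isRotated hnP hr]; simp
  | cons a P1 =>
  have hc0 := List.formPerm_eq_of_isRotated hnP hr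
  have hnP' := hr.nodup_iff.1 hnP
  have hc0w : P.formPerm w = a := by
    rw [hc0]; exact List.formPerm_cons_concat_apply_last _ _ _
  have haP : a ∈ P := hr.perm.mem_iff.2 (by simp)
  have haz : a ≠ z := fun h => hzP (h ▸ haP)
  have haw : a ≠ w := by rw [← hc0w]; exact hw
  have haU : a ∈ U := by simpa [haz] using h.swap.mem a
  have haU0 : a ∈ U0 := by
    have := hr'.perm.mem_iff.1 haU
    simpa [haw] using this
  obtain ⟨U1, l, hU1⟩ := (List.eq_nil_or_concat U0).resolve_left (by rintro rfl; simp at haU0)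
  rw [List.concat_eq_append] at hU1
  subst hU1
  have hc1 := List.formPerm_eq_of_isRotated hnU hr'
  have hnU' := hr'.nodup_iff.1 hnU
  have hc1' : U.formPerm = (U1 ++ [l]).formPerm * swap l w := by
    rw [hc1, ← List.formPerm_append_pair]; simp
  have hwU1 : w ∉ U1 ++ [l] := fun hh => (List.nodup_append.1 hnU').2.2 _ hh _ (by simp) rfl
  have hc1w : U.formPerm⁻¹ w = l := by
    rw [Perm.inv_eq_iff_eq, hc1', Perm.mul_apply, swap_apply_left, List.formPerm_apply_of_notMem hwU1]
  have hlU : l ∈ U := hr'.perm.mem_iff.2 (by simp)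
  have hlz : l ≠ z := fun h => hzU (h ▸ hlU)
  have hlw : l ≠ w := fun h => hwU1 (h ▸ by simp)
  rw [hc0w, hc1w]
  by_cases hla : l = a
  · subst hla
    refine ⟨P.map (swap w l), U.map (swap w l), ν * swap w l, ?_, ?_, ?_, ?_⟩
    · have := h.rename (swap w l)
      rw [pairRename_mul] at this
      simpa [swap_apply_of_ne_of_ne hwz.symm hlz.symm] using this
    · rw [formPerm_map_perm, swap_inv]
    · rw [formPerm_map_perm, swap_inv]
    · rw [Perm.sign_mul, Perm.sign_swap hlw.symm, hs]; simp
  · have haU1 : a ∈ U1 := by simpa [Ne.symm hla] using haU0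
    have hlP : l ∈ P := by simpa [hlz] using h.mem l
    have hlP1 : l ∈ P1 := by
      have := hr.perm.mem_iff.1 hlP
      simpa [hlw, hla] using this
    obtain ⟨W1, W2, rfl⟩ := List.append_of_mem hlP1
    obtain ⟨V2, V1, rfl⟩ := List.append_of_mem haU1
    have hr2 : U.IsRotated (V1 ++ l :: w :: V2 ++ [a]) := by
      refine hr'.trans ?_
      simpa using List.isRotated_append (l := V2 ++ [a]) (l' := V1 ++ [l, w])
    have h2 := h.rotated hr hr2
    have h3 := Hmove (π := pairRename π ν) (z := z) (a := a) (l := l) (w := w) (W1 := W1) (W2 := W2) (V1 := V1) (V2 := V2) (by simpa using h2)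
    rw [pairRename_mul] at h3
    have hn3P : (a :: W1 ++ l :: w :: W2).Nodup := (List.nodup_append.1 h3.nodup).1
    have hn3U : (V1 ++ l :: V2 ++ [w, a]).Nodup := (List.nodup_cons.1 h3.swap.nodup).2
    refine ⟨_, _, _, h3, ?_, ?_, ?_⟩
    · have r1 : (a :: W1 ++ l :: w :: W2).IsRotated (W2 ++ a :: W1 ++ [l, w]) := by
        simpa using List.isRotated_append (l := a :: W1 ++ [l, w]) (l' := W2)
      have r2 : (W2 ++ a :: W1 ++ [l]).IsRotated (a :: W1 ++ l :: W2) := by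
        simpa using List.isRotated_append (l := W2) (l' := a :: W1 ++ [l])
      have r3 : P.IsRotated (w :: a :: W1 ++ l :: W2) := by
        refine hr.trans ?_
        simpa using List.isRotated_append (l := a :: W1 ++ l :: W2) (l' := [w])
      have n2 : (W2 ++ a :: W1 ++ [l]).Nodup := by
        have := r1.nodup_iff.1 hn3P
        grind [List.nodup_append]
      rw [List.formPerm_eq_of_isRotated hn3P r1, List.formPerm_append_pair,
        List.formPerm_eq_of_isRotated n2 r2, List.formPerm_eq_of_isRotated hnP r3]
      simp only [List.cons_append]
      rw [List.formPerm_cons_cons]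
      rw [swap_mul_self_mul, swap_comm l w]
    · have r1 : (V1 ++ l :: V2 ++ [w, a]).IsRotated (w :: a :: V1 ++ l :: V2) := by
        simpa using List.isRotated_append (l := V1 ++ l :: V2) (l' := [w, a])
      have r2 : (V2 ++ a :: V1 ++ [l]).IsRotated (a :: V1 ++ l :: V2) := by
        simpa using List.isRotated_append (l := V2) (l' := a :: V1 ++ [l])
      have n2 : (V2 ++ a :: V1 ++ [l]).Nodup := (List.nodup_append.1 hnU').1
      rw [List.formPerm_eq_of_isRotated hn3U r1]
      simp only [List.cons_append]
      rw [List.formPerm_cons_cons, hc1', List.formPerm_eq_of_isRotated n2 r2, swap_comm l w]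
      simp [mul_assoc]
    · rw [Perm.sign_mul, Perm.sign_swap hwz.symm, hs]; simp

theorem RS.odd [DecidableEq A] {π : RPair A} {z : A} {s : ℤˣ} {c0 c1 : Perm A} (h : RS π z s c0 c1)
    (h' : RS π z (-s) c0 c1) : ∃ ν ∈ GG π, Perm.sign ν = -1 := by
  obtain ⟨P, U, ν, h, rfl, rfl, hs⟩ := h
  obtain ⟨P', U', ν', h', e1, e2, hs'⟩ := h'
  have hnP : P.Nodup := (List.nodup_append.1 h.nodup).1
  have hnU : U.Nodup := (List.nodup_cons.1 h.swap.nodup).2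
  have hnP' : P'.Nodup := (List.nodup_append.1 h'.nodup).1
  have hnU' : U'.Nodup := (List.nodup_cons.1 h'.swap.nodup).2
  have perm1 : P.Perm P' := by
    have : (P ++ [z]).Perm (P' ++ [z]) := by
      rw [List.perm_ext_iff_of_nodup h.nodup h'.nodup]; intro a; simp only [h.mem a, h'.mem a]
    exact (List.perm_append_right_iff _).1 this
  have perm2 : U.Perm U' := by
    have : (z :: U).Perm (z :: U') := by
      rw [List.perm_ext_iff_of_nodup h.swap.nodup h'.swap.nodup]; intro a; simp only [h.swap.mem a, h'.swap.mem a]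
    exact (List.perm_cons _).1 this
  have small : ∀ L L' : List A, L.Perm L' → L.Nodup → L.formPerm = L'.formPerm → L.IsRotated L' := by
    intro L L' hp hn he
    rcases (List.formPerm_eq_formPerm_iff hn (hp.nodup_iff.1 hn)).1 he with h | ⟨h1, h2⟩
    · exact h
    · rcases L with _ | ⟨x, _ | ⟨y, L⟩⟩
      · simp at hp; subst hp; exact List.IsRotated.refl _
      · rw [List.singleton_perm] at hp; subst hp; exact List.IsRotated.refl _
      · simp at h1
  obtain ⟨ρ, hρ, hE⟩ := h.rotated (small P P' perm1 hnP e1.symm) (small U U' perm2 hnU e2.symm)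
  have hE' := mem_of_RL h' hρ
  have h5 := E_rename ν⁻¹ (E_trans hE (E_symm hE'))
  rw [pairRename_mul, pairRename_mul, mul_inv_cancel, pairRename_one] at h5
  refine ⟨ν' * ν⁻¹, h5, ?_⟩
  simp [hs, hs']

noncomputable def PP (e : A ≃ Fin (Fintype.card A)) (x : A → ℚ) (b : A) : ℚ :=
  ∑ c, if e c < e b then x c else 0

theorem PP_add (e : A ≃ Fin (Fintype.card A)) (x y : A → ℚ) (b : A) : PP e (x + y) b = PP e x b + PP e y b := by
  unfold PP
  rw [← Finset.sum_add_distrib]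
  refine Finset.sum_congr rfl fun c _ => ?_
  split_ifs <;> simp

theorem PP_smul (e : A ≃ Fin (Fintype.card A)) (r : ℚ) (x : A → ℚ) (b : A) : PP e (r • x) b = r * PP e x b := by
  unfold PP
  rw [Finset.mul_sum]
  refine Finset.sum_congr rfl fun c _ => ?_
  split_ifs <;> simp

def MM [DecidableEq A] (α β : A) : (A → ℚ) →ₗ[ℚ] (A → ℚ) := Matrix.toLin' (Matrix.transvection α β (-1))

theorem MM_det [DecidableEq A] {α β : A} (h : α ≠ β) : LinearMap.det (MM α β) = 1 := by
  rw [MM, LinearMap.det_toLin', Matrix.det_transvection_of_ne _ _ h]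

theorem MM_apply [DecidableEq A] (α β : A) (x : A → ℚ) (c : A) :
    MM α β x c = x c - if c = α then x β else 0 := by
  rw [MM, Matrix.toLin'_apply, Matrix.transvection, Matrix.add_mulVec, Matrix.one_mulVec]
  by_cases h : c = α
  · subst h; simp [Matrix.mulVec, dotProduct, Matrix.single_apply]; ring
  · simp [Matrix.mulVec, dotProduct, Matrix.single_apply, h, Ne.symm h]

theorem PP_MM [DecidableEq A] (e : A ≃ Fin (Fintype.card A)) (α β : A) (x : A → ℚ) (b : A) :
    PP e (MM α β x) b = PP e x b - if e α < e b then x β else 0 := by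
  unfold PP
  have : (if e α < e b then x β else 0) = ∑ c, if c = α then (if e α < e b then x β else 0) else 0 := by simp
  rw [this, ← Finset.sum_sub_distrib]
  refine Finset.sum_congr rfl fun c _ => ?_
  rw [MM_apply]
  by_cases h : c = α
  · subst h; simp; split_ifs <;> simp
  · simp [h]

theorem PP_mv [DecidableEq A] (e e' : A ≃ Fin (Fintype.card A)) (β : A) (x : A → ℚ) (b b' : A)
    (h : ∀ c, c ≠ β → (e' c < e' b' ↔ e c < e b)) :
    PP e' x b' = PP e x b + (if e' β < e' b' then x β else 0) - if e β < e b then x β else 0 := by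
  unfold PP
  have h1 : ∀ k : ℚ, k = ∑ c, if c = β then k else 0 := by intro k; simp
  rw [h1 (if e' β < e' b' then x β else 0), h1 (if e β < e b then x β else 0), ← Finset.sum_add_distrib, ← Finset.sum_sub_distrib]
  refine Finset.sum_congr rfl fun c _ => ?_
  by_cases hc : c = β
  · subst hc; simp
  · simp [hc, h c hc]

theorem PP_first {e : A ≃ Fin (Fintype.card A)} {a : A} (h : ∀ x, e a ≤ e x) (x : A → ℚ) : PP e x a = 0 := by
  unfold PP
  refine Finset.sum_eq_zero fun c _ => ?_
  rw [if_neg (not_lt.2 (h c))]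

theorem PP_last [DecidableEq A] {e : A ≃ Fin (Fintype.card A)} {a : A} (h : ∀ x, e x ≤ e a) (x : A → ℚ) :
    PP e x a + x a = ∑ c, x c := by
  unfold PP
  have : x a = ∑ c, if c = a then x c else 0 := by simp
  rw [this, ← Finset.sum_add_distrib]
  refine Finset.sum_congr rfl fun c _ => ?_
  by_cases hc : c = a
  · subst hc; simp
  · have : e c < e a := lt_of_le_of_ne (h c) (fun h => hc (e.injective h))
    simp [this, hc]

/-- next-letter: -/
theorem PP_succ [DecidableEq A] {e : A ≃ Fin (Fintype.card A)} {a b : A} (h : (e b : ℕ) = e a + 1) (x : A → ℚ) :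
    PP e x b = PP e x a + x a := by
  unfold PP
  have : x a = ∑ c, if c = a then x c else 0 := by simp
  rw [this, ← Finset.sum_add_distrib]
  refine Finset.sum_congr rfl fun c _ => ?_
  by_cases hc : c = a
  · subst hc; simp [Fin.lt_def, h]
  · have : (e c : ℕ) ≠ e a := fun h => hc (e.injective (Fin.ext h))
    simp only [Fin.lt_def, h, hc, if_false, add_zero]
    congr 1
    simp; omega

theorem pos_ne {e : A ≃ Fin (Fintype.card A)} {a b : A} (h : a ≠ b) : (e a : ℕ) ≠ e b := 
  fun h' => h (e.injective (Fin.ext h'))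

theorem right_facts [DecidableEq A] {π π' : RPair A} {ε : Bool} {α β : A} (h : RMv ε α β π π') (hne : α ≠ β) (x : A → ℚ) :
    (∀ b, PP (π' ε) (MM α β x) b = PP (π ε) x b) ∧
    (∀ b, b ≠ β → PP (π' !ε) (MM α β x) b = PP (π !ε) x b) ∧
    (PP (π' !ε) (MM α β x) β = PP (π !ε) x α + x α - x β) ∧
    (PP (π ε) x α + x α = PP (π !ε) x β + x β) := by
  obtain ⟨h1, h2, h3, h4, h5, h6⟩ := h
  generalize π (!ε) = e at *
  generalize π' (!ε) = e' at *
  have hlast : ∀ c, c ≠ β → (e c : ℕ) < e β := fun c hc =>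
    lt_of_le_of_ne (h2 c) (pos_ne hc)
  have hpos : ∀ c, c ≠ β → (e' c : ℕ) = if (e c : ℕ) ≤ e α then (e c : ℕ) else e c + 1 := by
    intro c hc
    split_ifs with h
    · rw [h4 c h]
    · exact h6 c h hc
  refine ⟨?_, ?_, ?_, ?_⟩
  · intro b
    rw [h3, PP_MM, if_neg (not_lt.2 (h1 b)), sub_zero]
  · intro b hb
    have hb' := hpos b hb
    have hα' := hpos α hne
    rw [PP_MM, PP_mv e e' β x b b]
    · have := hlast b hb
      simp only [Fin.lt_def] at *
      split_ifs at * <;> first | omega | simp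
    · intro c hc
      have hc' := hpos c hc
      simp only [Fin.lt_def]
      split_ifs at * <;> omega
  · have hα' := hpos α hne
    rw [PP_MM, PP_mv e e' α x α β]
    · simp only [Fin.lt_def] at *
      split_ifs at * <;> first | omega | simp
    · intro c hc
      have := pos_ne (e := e) hc
      by_cases hcb : c = β
      · subst hcb
        have := hlast _ hne
        simp only [Fin.lt_def]
        omega
      · have hc' := hpos c hcb
        simp only [Fin.lt_def]
        split_ifs at * <;> omega
  · rw [PP_last h1, PP_last h2]

theorem left_facts [DecidableEq A] {π π' : RPair A} {ε : Bool} {α β : A} (h : LMv ε α β π π') (hne : α ≠ β) (x : A → ℚ) :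
    (∀ b, b ≠ α → PP (π' ε) (MM α β x) b = PP (π ε) x b - x β) ∧
    (∀ y, PP (π' ε) y α = 0) ∧ (PP (π ε) x α = 0) ∧
    (∀ b, b ≠ α → b ≠ β → PP (π' !ε) (MM α β x) b = PP (π !ε) x b - x β) ∧
    (PP (π' !ε) (MM α β x) α = PP (π !ε) x α) ∧
    (PP (π' !ε) (MM α β x) β = PP (π !ε) x α - x β) ∧
    (PP (π !ε) x β = 0) := by
  obtain ⟨h1, h2, h3, h4, h5, h6⟩ := h
  generalize π (!ε) = e at *
  generalize π' (!ε) = e' at *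
  have hfst : ∀ c, c ≠ β → (e β : ℕ) < e c := fun c hc =>
    lt_of_le_of_ne (h2 c) (pos_ne (Ne.symm hc))
  have hpos : ∀ c, c ≠ β → (e' c : ℕ) = if (e α : ℕ) ≤ e c then (e c : ℕ) else e c - 1 := by
    intro c hc
    split_ifs with h
    · rw [h4 c h]
    · exact h6 c h hc
  have hα' := hpos α hne
  have hα := hfst α hne
  refine ⟨?_, ?_, ?_, ?_, ?_, ?_, ?_⟩
  · intro b hb
    rw [h3, PP_MM, if_pos]
    exact lt_of_le_of_ne (h1 b) (fun h => hb ((π ε).injective h.symm))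
  · intro y; rw [h3]; exact PP_first h1 y
  · exact PP_first h1 x
  · intro b hb hbβ
    have hb' := hpos b hbβ
    have hbα := pos_ne (e := e) hb
    rw [PP_MM, PP_mv e e' β x b b]
    · have := hfst b hbβ
      simp only [Fin.lt_def] at *
      split_ifs at * <;> first | omega | (simp)
    · intro c hc
      have hc' := hpos c hc
      have := hfst c hc
      have := hfst b hbβ
      simp only [Fin.lt_def]
      split_ifs at * <;> omega
  · rw [PP_MM, PP_mv e e' β x α α]
    · simp only [Fin.lt_def] at *
      split_ifs at * <;> first | omega | (simp)
    · intro c hc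
      have hc' := hpos c hc
      have := hfst c hc
      simp only [Fin.lt_def]
      split_ifs at * <;> omega
  · rw [PP_MM, PP_mv e e' β x α β]
    · simp only [Fin.lt_def] at *
      split_ifs at * <;> first | omega | (simp)
    · intro c hc
      have hc' := hpos c hc
      have := hfst c hc
      simp only [Fin.lt_def]
      split_ifs at * <;> omega
  · exact PP_first h2 x

theorem PP_sq [DecidableEq A] (e : A ≃ Fin (Fintype.card A)) (x : A → ℚ) :
    2 * ∑ b, x b * PP e x b = (∑ b, x b) ^ 2 - ∑ b, x b ^ 2 := by
  have h1 : ∑ b, x b * PP e x b = ∑ b, ∑ c, if e c < e b then x b * x c else 0 := by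
    refine Finset.sum_congr rfl fun b _ => ?_
    rw [PP, Finset.mul_sum]
    refine Finset.sum_congr rfl fun c _ => ?_
    split_ifs <;> simp
  have h2 : ∑ b, x b * PP e x b = ∑ b, ∑ c, if e b < e c then x b * x c else 0 := by
    rw [h1, Finset.sum_comm]
    refine Finset.sum_congr rfl fun b _ => Finset.sum_congr rfl fun c _ => ?_
    rw [mul_comm]
  have h3 : ∑ b, x b ^ 2 = ∑ b, ∑ c, if c = b then x b * x c else 0 := by
    refine Finset.sum_congr rfl fun b _ => ?_
    simp [sq]
  rw [two_mul]
  nth_rewrite 1 [h1]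
  rw [h2, h3, sq, Finset.sum_mul_sum, ← Finset.sum_add_distrib, ← Finset.sum_sub_distrib]
  refine Finset.sum_congr rfl fun b _ => ?_
  rw [← Finset.sum_add_distrib, ← Finset.sum_sub_distrib]
  refine Finset.sum_congr rfl fun c _ => ?_
  rcases lt_trichotomy (e c) (e b) with h | h | h
  · have : c ≠ b := by rintro rfl; exact lt_irrefl _ h
    simp [h, not_lt.2 h.le, this]
  · have := e.injective h
    subst this; simp
  · have : c ≠ b := by rintro rfl; exact lt_irrefl _ h
    simp [h, not_lt.2 h.le, this]

noncomputable def DD (π : RPair A) (ε : Bool) (x : A → ℚ) (b : A) : ℚ := PP (π !ε) x b - PP (π ε) x b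

noncomputable def BB (π : RPair A) : LinearMap.BilinForm ℚ (A → ℚ) :=
  LinearMap.mk₂ ℚ (fun x y => ∑ b, y b * DD π false x b)
    (fun x x' y => by
      rw [← Finset.sum_add_distrib]
      refine Finset.sum_congr rfl fun b _ => ?_
      simp only [DD, PP_add]; ring)
    (fun r x y => by
      rw [smul_eq_mul, Finset.mul_sum]
      refine Finset.sum_congr rfl fun b _ => ?_
      simp only [DD, PP_smul]; ring)
    (fun x y y' => by
      rw [← Finset.sum_add_distrib]
      refine Finset.sum_congr rfl fun b _ => ?_
      simp only [Pi.add_apply]; ring)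
    (fun r x y => by
      rw [smul_eq_mul, Finset.mul_sum]
      refine Finset.sum_congr rfl fun b _ => ?_
      simp only [Pi.smul_apply, smul_eq_mul]; ring)

theorem BB_apply (π : RPair A) (x y : A → ℚ) : BB π x y = ∑ b, y b * DD π false x b := rfl

theorem BB_alt [DecidableEq A] (π : RPair A) : (BB π).IsAlt := by
  intro x
  rw [BB_apply]
  have h1 := PP_sq (π false) x
  have h2 := PP_sq (π true) x
  simp only [DD, mul_sub, Finset.sum_sub_distrib, Bool.not_false]
  linarith

def KK (π : RPair A) (x : A → ℚ) : Prop := ∀ b, PP (π false) x b = PP (π true) x b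

theorem KK_iff [DecidableEq A] (π : RPair A) (x : A → ℚ) : KK π x ↔ ∀ y, BB π x y = 0 := by
  constructor
  · intro h y
    rw [BB_apply]
    refine Finset.sum_eq_zero fun b _ => ?_
    simp [DD, h b]
  · intro h b
    have := h (Pi.single b 1)
    rw [BB_apply] at this
    simp [Pi.single_apply, DD] at this
    linarith

theorem BB_MM [DecidableEq A] {π π' : RPair A} {ε : Bool} {α β : A} (hne : α ≠ β)
    (h : ∀ x, ∀ b, DD π' ε (MM α β x) b = DD π ε x b + if b = β then DD π ε x α else 0) (x y : A → ℚ) :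
    BB π' (MM α β x) (MM α β y) = BB π x y := by
  have h0 : ∀ x b, DD π' false (MM α β x) b = DD π false x b + if b = β then DD π false x α else 0 := by
    cases ε
    · exact h
    · intro x b
      have := h x b
      simp only [DD, Bool.not_true, Bool.not_false] at *
      split_ifs at * <;> linarith
  rw [BB_apply, BB_apply]
  have e1 : ∀ b, MM α β y b * DD π' false (MM α β x) b = y b * DD π false x b
     + (if b = β then y β * DD π false x α else 0) - if b = α then y β * DD π false x α else 0 := by
    intro b
    rw [MM_apply, h0]
    by_cases h1 : b = β
    · subst h1; simp [hne.symm]; ring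
    · by_cases h2 : b = α
      · subst h2; simp [hne]; ring
      · simp [h1, h2]
  simp only [e1, Finset.sum_sub_distrib, Finset.sum_add_distrib]
  simp

def PRel [Nonempty A] (π π' : RPair A) : Prop :=
  ∃ M : (A → ℚ) →ₗ[ℚ] (A → ℚ), LinearMap.det M = 1 ∧ (∀ x y, BB π' (M x) (M y) = BB π x y) ∧
  ∃ f : Perm A, f (XOf π) = XOf π' ∧ ∃ c : (A → ℚ) → ℚ,
    ∀ x, KK π x → ∀ b, b ≠ XOf π → PP (π' false) (M x) (f b) = PP (π false) x b + c x

theorem det_surj {M : (A → ℚ) →ₗ[ℚ] (A → ℚ)} (h : LinearMap.det M = 1) : Function.Surjective M := by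
  have : IsUnit M := by
    rw [LinearMap.isUnit_iff_isUnit_det, h]; exact isUnit_one
  exact ((Module.End.isUnit_iff _).1 this).2

theorem KK_map [DecidableEq A] {π π' : RPair A} {M : (A → ℚ) →ₗ[ℚ] (A → ℚ)} (hd : LinearMap.det M = 1)
    (hB : ∀ x y, BB π' (M x) (M y) = BB π x y) (x : A → ℚ) : KK π' (M x) ↔ KK π x := by
  rw [KK_iff, KK_iff]
  constructor
  · intro h y; rw [← hB]; exact h _
  · intro h y
    obtain ⟨y, rfl⟩ := det_surj hd y
    rw [hB]; exact h _

theorem PRel.refl [Nonempty A] (π : RPair A) : PRel π π :=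
  ⟨LinearMap.id, LinearMap.det_id, fun _ _ => rfl, 1, rfl, 0, fun x _ b _ => by simp⟩

theorem PRel.trans [DecidableEq A] [Nonempty A] {π π' π'' : RPair A} (h : PRel π π') (h' : PRel π' π'') : PRel π π'' := by
  obtain ⟨M, h1, h2, f, h3, c, h4⟩ := h
  obtain ⟨M', h1', h2', f', h3', c', h4'⟩ := h'
  refine ⟨M' ∘ₗ M, ?_, ?_, f' * f, ?_, fun x => c x + c' (M x), ?_⟩
  · rw [LinearMap.det_comp, h1, h1', mul_one]
  · intro x y; simp [h2, h2']
  · simp [h3, h3']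
  · intro x hx b hb
    have := h4' (M x) ((KK_map h1 h2 x).2 hx) (f b) (by rw [← h3]; simpa using hb)
    simp only [LinearMap.comp_apply, Perm.mul_apply]
    rw [this, h4 x hx b hb, add_assoc]

theorem XOf_eq [Nonempty A] {π : RPair A} {a : A} {t : List A} (h : toL (π false) = a :: t) : XOf π = a := by
  have := toL_pos (u := []) h
  rw [XOf, Equiv.symm_apply_eq]
  exact Fin.ext this.symm

theorem KK.any {π : RPair A} {x : A → ℚ} (h : KK π x) (ε : Bool) (b : A) : PP (π ε) x b = PP (π !ε) x b := by
  cases ε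
  · exact h b
  · exact (h b).symm

theorem rel_right [DecidableEq A] [Nonempty A] {π π' : RPair A} (h : RightMove π π') : PRel π π' := by
  obtain ⟨ε, α, β, t, u, v, h1, h2⟩ := lists_of_right h
  have hne : α ≠ β := by
    rintro rfl
    have := toL_nodup (π !ε)
    rw [h1.2] at this
    simp [List.nodup_append] at this
  have F := right_facts (right_of_lists h1 h2) hne
  refine ⟨MM α β, MM_det hne, BB_MM (ε := ε) hne ?_, 1, ?_, 0, ?_⟩
  · intro x b
    obtain ⟨f1, f2, f3, f4⟩ := F x
    by_cases hb : b = β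
    · subst hb; simp only [DD, f1, f3, if_true]; linarith
    · simp [DD, f1, f2 b hb, hb]
  · cases ε
    · have : π' false = π false := toL_inj (h2.1.trans h1.1.symm)
      simp [XOf, this]
    · cases u with
      | nil => rw [XOf_eq (π := π) h1.2, XOf_eq (π := π') h2.2]; rfl
      | cons a u => rw [XOf_eq (π := π) h1.2, XOf_eq (π := π') h2.2]; rfl
  · intro x hx b _
    obtain ⟨f1, f2, f3, f4⟩ := F x
    simp only [Perm.one_apply, Pi.zero_apply, add_zero]
    cases ε
    · exact f1 b
    · by_cases hb : b = β
      · subst hb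
        have := hx α
        simp only [Bool.not_true] at *
        rw [f3]; linarith
      · exact f2 b hb

theorem rel_left [DecidableEq A] [Nonempty A] {π π' : RPair A} (h : LeftMove π π') : PRel π π' := by
  rcases lists_of_left h with rfl | ⟨ε, α, β, t, u, v, h1, h2⟩
  · exact PRel.refl _
  have hn := toL_nodup (π !ε)
  rw [h1.2] at hn
  have hne : α ≠ β := by
    rintro rfl
    simp at hn
  have F := left_facts (left_of_lists h1 h2) hne
  have hB : ∀ x y, BB π' (MM α β x) (MM α β y) = BB π x y := by
    refine BB_MM (ε := ε) hne ?_
    intro x b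
    obtain ⟨f1, f2, f3, f4, f5, f6, f7⟩ := F x
    by_cases hb : b = β
    · subst hb; simp only [DD, f1 _ hne.symm, f6, if_true]; linarith
    · by_cases hb' : b = α
      · subst hb'; simp only [DD, f2, f3, f5, hb, if_false]; linarith
      · simp only [DD, f1 b hb', f4 b hb' hb, hb, if_false]; linarith
  cases ε
  · refine ⟨MM α β, MM_det hne, hB, 1, ?_, fun x => - x β, ?_⟩
    · rw [XOf_eq (π := π) h1.1, XOf_eq (π := π') h2.1]; rfl
    · intro x hx b hb
      rw [XOf_eq (π := π) h1.1] at hb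
      rw [Perm.one_apply, (F x).1 b hb]; ring
  · have hX := XOf_eq (π := π) h1.2
    simp only [Bool.not_true] at *
    cases v with
    | nil =>
      refine ⟨MM α β, MM_det hne, hB, 1, ?_, fun x => - x β, ?_⟩
      · rw [XOf_eq (π := π) h1.2, XOf_eq (π := π') h2.2]; rfl
      · intro x hx b hb
        obtain ⟨f1, f2, f3, f4, f5, f6, f7⟩ := F x
        rw [hX] at hb
        by_cases hb' : b = α
        · subst hb'
          have e : (π false b : ℕ) = π false β + 1 := by
            rw [toL_pos (e := π false) (u := []) h1.2, toL_pos (e := π false) (u := [β]) h1.2]; rfl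
          have := PP_succ e x
          rw [Perm.one_apply, f5]
          have := hx b
          linarith
        · rw [Perm.one_apply, f4 b hb' hb]; ring
    | cons φ v =>
      have hX' := XOf_eq (π := π') h2.2
      have n1 : φ ≠ α := by rintro rfl; simp [List.nodup_append] at hn
      have n2 : φ ≠ β := by rintro rfl; simp [List.nodup_append] at hn
      refine ⟨MM α β, MM_det hne, hB, swap α β * swap β φ, ?_, fun x => - x β, ?_⟩
      · rw [hX, hX', Perm.mul_apply, swap_apply_left, swap_apply_of_ne_of_ne n1 n2]
      · intro x hx b hb
        obtain ⟨f1, f2, f3, f4, f5, f6, f7⟩ := F x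
        rw [hX] at hb
        have hα := hx α
        by_cases hb' : b = α
        · subst hb'
          rw [Perm.mul_apply, swap_apply_of_ne_of_ne hne n1.symm, swap_apply_left, f6]; ring
        by_cases hb2 : b = φ
        · subst hb2
          have e : (π false b : ℕ) = π false β + 1 := by
            rw [toL_pos (e := π false) (u := []) h1.2, toL_pos (e := π false) (u := [β]) h1.2]; rfl
          have := PP_succ e x
          rw [Perm.mul_apply, swap_apply_right, swap_apply_right, f5]
          linarith
        · rw [Perm.mul_apply, swap_apply_of_ne_of_ne hb hb2, swap_apply_of_ne_of_ne hb' hb, f4 b hb' hb]; ring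

theorem rel_of_E [DecidableEq A] [Nonempty A] {π π' : RPair A} (h : π' ∈ EClass π) : PRel π π' := by
  induction h with
  | refl => exact PRel.refl _
  | tail _ h ih => exact ih.trans (h.elim rel_right rel_left)

def Eqv (π : RPair A) (b b' : A) : Prop := ∀ x, KK π x → PP (π false) x b = PP (π false) x b'

noncomputable def cls [Nonempty A] (π : RPair A) (b : A) : ℕ := {c | c ≠ XOf π ∧ Eqv π b c}.ncard

def Simple [Nonempty A] (π : RPair A) : Prop :=
  ∀ b b', b ≠ XOf π → b' ≠ XOf π → cls π b = cls π b' → Eqv π b b'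

theorem KK_map' [DecidableEq A] {π π' : RPair A} {M : (A → ℚ) →ₗ[ℚ] (A → ℚ)} (hd : Function.Surjective M)
    (hB : ∀ x y, BB π' (M x) (M y) = BB π x y) (x : A → ℚ) : KK π' (M x) ↔ KK π x := by
  rw [KK_iff, KK_iff]
  constructor
  · intro h y; rw [← hB]; exact h _
  · intro h y
    obtain ⟨y, rfl⟩ := hd y
    rw [hB]; exact h _

theorem eqv_data [DecidableEq A] [Nonempty A] {π π' : RPair A} {M : (A → ℚ) →ₗ[ℚ] (A → ℚ)} (hd : Function.Surjective M)
    (hB : ∀ x y, BB π' (M x) (M y) = BB π x y) {f : Perm A} {c : (A → ℚ) → ℚ}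
    (hc : ∀ x, KK π x → ∀ b, b ≠ XOf π → PP (π' false) (M x) (f b) = PP (π false) x b + c x)
    {b b' : A} (hb : b ≠ XOf π) (hb' : b' ≠ XOf π) : Eqv π' (f b) (f b') ↔ Eqv π b b' := by
  constructor
  · intro h x hx
    have := h (M x) ((KK_map' hd hB x).2 hx)
    rw [hc x hx b hb, hc x hx b' hb'] at this
    linarith
  · intro h x hx
    obtain ⟨x, rfl⟩ := hd x
    have hx' := (KK_map' hd hB x).1 hx
    rw [hc x hx' b hb, hc x hx' b' hb', h x hx']

theorem cls_data [Nonempty A] {π π' : RPair A} {f : Perm A} (hX : f (XOf π) = XOf π')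
    (h : ∀ b b', b ≠ XOf π → b' ≠ XOf π → (Eqv π' (f b) (f b') ↔ Eqv π b b')) {b : A} (hb : b ≠ XOf π) :
    cls π' (f b) = cls π b := by
  unfold cls
  rw [← Set.ncard_image_of_injective {c | c ≠ XOf π ∧ Eqv π b c} f.injective]
  congr 1
  ext c
  obtain ⟨c, rfl⟩ := f.surjective c
  simp only [Set.mem_ofPred_eq, Set.mem_image, EmbeddingLike.apply_eq_iff_eq, exists_eq_right]
  rw [← hX]
  constructor
  · rintro ⟨h1, h2⟩
    have h1' : c ≠ XOf π := fun h => h1 (by rw [h])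
    exact ⟨h1', (h b c hb h1').1 h2⟩
  · rintro ⟨h1, h2⟩
    exact ⟨fun h => h1 (f.injective h), (h b c hb h1).2 h2⟩

theorem simple_of_E [DecidableEq A] [Nonempty A] {π π' : RPair A} (h : π' ∈ EClass π) (hs : Simple π') : Simple π := by
  obtain ⟨M, h1, h2, f, h3, c, h4⟩ := rel_of_E h
  have he := fun b b' (hb : b ≠ XOf π) (hb' : b' ≠ XOf π) => eqv_data (det_surj h1) h2 h4 hb hb'
  intro b b' hb hb' hcl
  rw [← he b b' hb hb']
  apply hs
  · rw [← h3]; exact fun h => hb (f.injective h)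
  · rw [← h3]; exact fun h => hb' (f.injective h)
  · rw [cls_data h3 he hb, cls_data h3 he hb', hcl]

theorem XOf_first [Nonempty A] (π : RPair A) (x : A) : π false (XOf π) ≤ π false x := by
  rw [XOf, Equiv.apply_symm_apply, Fin.le_def]; simp [posFirst]

theorem le_last [Nonempty A] (π : RPair A) (ε : Bool) (x : A) : π ε x ≤ π ε ((π ε).symm (posLast A)) := by
  rw [Equiv.apply_symm_apply, Fin.le_def]
  have := (π ε x).isLt
  simp only [posLast]; omega

theorem PP_S [DecidableEq A] [Nonempty A] {π : RPair A} {S : Perm A} (hS : IsS π S) {x : A → ℚ} (hx : KK π x) (b : A) :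
    PP (π false) x (S b) = PP (π false) x b := by
  obtain ⟨h1, h2⟩ := hS b
  by_cases hb : π true b = posFirst A
  · rw [h1 hb]
    have e1 := PP_first (XOf_first π) x
    have e2 : PP (π true) x b = 0 := PP_first (e := π true) (a := b) (by intro y; rw [hb, Fin.le_def]; simp [posFirst]) x
    rw [hx b, e2]; exact e1
  · obtain ⟨h3, h4⟩ := h2 hb
    by_cases hb2 : (π true b : ℕ) = (π true ((π false).symm (posLast A)) : ℕ) + 1
    · rw [PP_succ (h3 hb2), hx b, PP_succ hb2, ← hx, hx ((π true).symm (posLast A)), PP_last (le_last π true), PP_last (le_last π false)]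
    · have hb' : (π true b : ℕ) ≠ 0 := fun h => hb (Fin.ext h)
      have h5 := h4 hb2
      set a := (π true).symm ⟨(π true b : ℕ) - 1, Nat.lt_of_le_of_lt (Nat.sub_le _ _) (π true b).isLt⟩ with ha
      have h6 : (π true b : ℕ) = π true a + 1 := by
        rw [ha, Equiv.apply_symm_apply]; simp only; omega
      rw [PP_succ h5, hx b, PP_succ h6, hx a]

theorem PP_Q [DecidableEq A] [Nonempty A] {π : RPair A} {S Q : Perm A} (hS : IsS π S) (hQ : IsQ π S Q) {x : A → ℚ} (hx : KK π x) (b : A) :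
    PP (π false) x (Q b) = PP (π false) x b := by
  by_cases hb : b = XOf π
  · rw [hb, hQ.1]
  · by_cases h : S b = XOf π
    · rw [(hQ.2 b hb).1 h, PP_S hS hx, PP_S hS hx]
    · rw [(hQ.2 b hb).2 h, PP_S hS hx]

theorem eqv_of_sc [DecidableEq A] [Nonempty A] {π : RPair A} {S Q : Perm A} (hS : IsS π S) (hQ : IsQ π S Q) {b b' : A}
    (h : Q.SameCycle b b') : Eqv π b b' := by
  intro x hx
  obtain ⟨n, -, rfl⟩ := h.exists_pow_eq'
  induction n with
  | zero => simp
  | succ n ih => 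
    rw [← papp, PP_Q hS hQ hx]
    exact ih ⟨n, by simp⟩

theorem exists_KK [DecidableEq A] [Nonempty A] {π : RPair A} {S : Perm A} (hS : IsS π S) (c : A → ℚ)
    (hc : ∀ b, c (S b) = c b) : ∃ x, KK π x ∧ ∀ b, PP (π false) x b = c b - c (XOf π) := by
  have hn : ∀ a : A, ∃ b, (π true a : ℕ) + 1 < Fintype.card A → (π true b : ℕ) = π true a + 1 := by
    intro a
    by_cases h : (π true a : ℕ) + 1 < Fintype.card A
    · exact ⟨(π true).symm ⟨_, h⟩, fun _ => by simp⟩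
    · exact ⟨a, fun h' => absurd h' h⟩
  choose nx hnx using hn
  set z0 := (π false).symm (posLast A) with hz0
  set z1 := (π true).symm (posLast A) with hz1
  have pz1 : (π true z1 : ℕ) = Fintype.card A - 1 := by rw [hz1, Equiv.apply_symm_apply]; rfl
  have pz0 : (π false z0 : ℕ) = Fintype.card A - 1 := by rw [hz0, Equiv.apply_symm_apply]; rfl
  have hpos : 0 < Fintype.card A := Fintype.card_pos
  let x : A → ℚ := fun a => if a = z1 then c (nx z0) - c z1 else c (nx a) - c a
  have hlt1 : ∀ a, a ≠ z1 → (π true a : ℕ) + 1 < Fintype.card A := by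
    intro a ha
    have := pos_ne (e := π true) ha
    have := (π true a).isLt
    omega
  have E1 : ∀ n b, (π true b : ℕ) = n → PP (π true) x b = c b - c (XOf π) := by
    intro n
    induction n with
    | zero =>
      intro b hb
      have hb' : π true b = posFirst A := Fin.ext hb
      rw [PP_first (e := π true) (a := b) (by intro y; rw [hb', Fin.le_def]; simp [posFirst]) x]
      have := (hS b).1 hb'
      rw [← hc b, this]; simp [XOf]
    | succ n ih =>
      intro b hb
      have hnl : n < Fintype.card A := by have := (π true b).isLt; omega
      obtain ⟨a, ha⟩ := (π true).surjective ⟨n, hnl⟩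
      have ha' : (π true a : ℕ) = n := by rw [ha]
      rw [PP_succ (a := a) (by omega), ih a ha']
      have haz : a ≠ z1 := by
        rintro rfl
        have := (π true b).isLt; omega
      have : nx a = b := (π true).injective (Fin.ext (by rw [hnx a (hlt1 a haz)]; omega))
      simp only [x, haz, if_false, this]; ring
  have E0 : ∀ n b, (π false b : ℕ) = n → PP (π false) x b = c b - c (XOf π) := by
    intro n
    induction n with
    | zero =>
      intro b hb
      have : b = XOf π := by rw [XOf, Equiv.eq_symm_apply]; exact Fin.ext hb
      rw [this, PP_first (XOf_first π)]; ring
    | succ n ih =>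
      intro b hb
      have hnl : n < Fintype.card A := by have := (π false b).isLt; omega
      obtain ⟨a, ha⟩ := (π false).surjective ⟨n, hnl⟩
      have ha' : (π false a : ℕ) = n := by rw [ha]
      rw [PP_succ (a := a) (by omega), ih a ha']
      have haz : a ≠ z0 := by
        rintro rfl
        have := (π false b).isLt; omega
      have key : ∀ b', π true b' ≠ posFirst A → (π false (S b') : ℕ) = n + 1 → c b' = c b := by
        intro b' _ h
        rw [← hc b', (π false).injective (Fin.ext (by omega) : π false (S b') = π false b)]
      by_cases h1 : a = z1
      · have hz : z0 ≠ z1 := fun h => haz (h1.trans h.symm)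
        have e1 := hnx z0 (hlt1 z0 hz)
        have e2 : π true (nx z0) ≠ posFirst A := by
          intro h; rw [h] at e1; simp [posFirst] at e1
        have e3 := ((hS (nx z0)).2 e2).1 e1
        have := key (nx z0) e2 (by rw [e3, ← hz1, ← h1, ha'])
        simp only [x, h1, if_true, this]; ring
      · have e1 := hnx a (hlt1 a h1)
        have e2 : π true (nx a) ≠ posFirst A := by
          intro h; rw [h] at e1; simp [posFirst] at e1
        have e4 : (π true (nx a) : ℕ) ≠ (π true z0 : ℕ) + 1 := by
          have := pos_ne (e := π true) haz
          omega
        have e3 := ((hS (nx a)).2 e2).2 e4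
        have := key (nx a) e2 (by
          rw [e3, ← ha']
          congr 3
          rw [Equiv.symm_apply_eq]
          exact Fin.ext (by simp [e1]))
        simp only [x, h1, if_false, this]; ring
  exact ⟨x, fun b => by rw [E0 _ b rfl, E1 _ b rfl], fun b => E0 _ b rfl⟩

theorem eqv_iff [DecidableEq A] [Nonempty A] {π : RPair A} {S Q : Perm A} (hS : IsS π S) (hQ : IsQ π S Q) {b b' : A}
    (hb : b ≠ XOf π) (hb' : b' ≠ XOf π) : Eqv π b b' ↔ Q.SameCycle b b' := by
  classical
  refine ⟨fun h => ?_, eqv_of_sc hS hQ⟩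
  let c : A → ℚ := fun a => if Q.SameCycle b (if a = XOf π then S (XOf π) else a) then 1 else 0
  obtain ⟨x, hx, hx2⟩ := exists_KK hS c (by
    intro a
    by_cases ha : a = XOf π
    · subst ha
      by_cases h2 : S (XOf π) = XOf π
      · rw [h2]
      · simp [c, h2]
    · by_cases h2 : S a = XOf π
      · have := (hQ.2 a ha).1 h2
        rw [h2] at this
        simp only [c, h2, ha, if_true, if_false, ← this, Perm.sameCycle_apply_right]
      · have := (hQ.2 a ha).2 h2
        rw [← this] at h2 ⊢
        simp only [c, h2, ha, if_false, Perm.sameCycle_apply_right])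
  have := h x hx
  rw [hx2, hx2] at this
  simp only [c, hb, hb', if_false, Perm.SameCycle.refl, if_true] at this
  by_contra hn
  simp [hn] at this

noncomputable def sz (Q : Perm A) (b : A) : ℕ := {c | Q.SameCycle b c}.ncard

theorem sc_X {Q : Perm A} {X b c : A} (hX : Q X = X) (hb : b ≠ X) (h : Q.SameCycle b c) : c ≠ X := by
  rintro rfl
  exact hb (h.symm.eq_of_left hX).symm

theorem cls_eq [DecidableEq A] [Nonempty A] {π : RPair A} {S Q : Perm A} (hS : IsS π S) (hQ : IsQ π S Q) {b : A}
    (hb : b ≠ XOf π) : cls π b = sz Q b := by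
  unfold cls sz
  congr 1
  ext c
  constructor
  · rintro ⟨h1, h2⟩; exact (eqv_iff hS hQ hb h1).1 h2
  · intro h
    have := sc_X hQ.1 hb h
    exact ⟨this, (eqv_iff hS hQ hb this).2 h⟩

theorem sz_fix {Q : Perm A} {b : A} (h : Q b = b) : sz Q b = 1 := by
  rw [sz, Set.ncard_eq_one]
  refine ⟨b, ?_⟩
  ext c
  simp only [Set.mem_ofPred_eq, Set.mem_singleton_iff]
  constructor
  · intro hc; exact (hc.eq_of_left h).symm
  · rintro rfl; exact Perm.SameCycle.refl _ _

theorem sz_support [DecidableEq A] {Q : Perm A} {b : A} (h : Q b ≠ b) : sz Q b = (Q.cycleOf b).support.card := by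
  rw [sz, ← Set.ncard_coe_finset]
  congr 1
  ext c
  rw [Finset.mem_coe, Perm.mem_support_cycleOf_iff]
  simp [h]

theorem lam_iff [DecidableEq A] {Q : Perm A} {X : A} (hX : Q X = X) : (lamOf Q).Nodup ↔
    ∀ b b', b ≠ X → b' ≠ X → sz Q b = sz Q b' → Q.SameCycle b b' := by
  have hmem : ∀ {b}, Q b ≠ b → Q.cycleOf b ∈ Q.cycleFactorsFinset := fun h =>
    Perm.cycleOf_mem_cycleFactorsFinset_iff.2 (Perm.mem_support.2 h)
  have h2le : ∀ {b}, Q b ≠ b → 2 ≤ sz Q b := by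
    intro b hb
    rw [sz_support hb]
    apply Perm.two_le_of_mem_cycleType (σ := Q)
    rw [Perm.cycleType_def]
    exact Multiset.mem_map.2 ⟨_, hmem hb, rfl⟩
  rw [lamOf, Multiset.nodup_add, Perm.cycleType_def, Multiset.nodup_map_iff_inj_on (Finset.nodup _)]
  constructor
  · rintro ⟨h1, h2, -⟩ b b' hb hb' he
    by_cases h : Q b = b
    · by_cases h' : Q b' = b'
      · have hcard : (Finset.univ.filter fun a => Q a = a).card ≤ 2 := by
          by_contra hc
          have : 2 ≤ (Finset.univ.filter fun a => Q a = a).card - 1 := by omega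
          have h3 := Multiset.nodup_iff_count_le_one.1 h2 1
          rw [Multiset.count_replicate_self] at h3
          omega
        by_cases hbb : b = b'
        · rw [hbb]
        · exfalso
          have : ({X, b, b'} : Finset A) ⊆ Finset.univ.filter fun a => Q a = a := by
            intro c hc
            simp at hc
            rcases hc with rfl | rfl | rfl <;> simpa
          have := Finset.card_le_card this
          rw [Finset.card_eq_three.2 ⟨X, b, b', hb.symm, hb'.symm, hbb, rfl⟩] at this
          omega
      · have := h2le h'; rw [sz_fix h] at he; omega
    · by_cases h' : Q b' = b'
      · have := h2le h; rw [sz_fix h'] at he; omega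
      · rw [sz_support h, sz_support h'] at he
        have := h1 _ (hmem h) _ (hmem h') he
        have h3 : b ∈ (Q.cycleOf b').support := by
          rw [← this, Perm.mem_support_cycleOf_iff]; exact ⟨Perm.SameCycle.refl _ _, Perm.mem_support.2 h⟩
        exact (Perm.mem_support_cycleOf_iff.1 h3).1.symm
  · intro H
    refine ⟨?_, ?_, ?_⟩
    · intro f hf g hg he
      obtain ⟨b, hb⟩ := (Perm.mem_cycleFactorsFinset_iff.1 hf).1.nonempty_support
      obtain ⟨b', hb'⟩ := (Perm.mem_cycleFactorsFinset_iff.1 hg).1.nonempty_support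
      have ef := Perm.cycle_is_cycleOf hb hf
      have eg := Perm.cycle_is_cycleOf hb' hg
      have q1 : Q b ≠ b := by
        have := (Perm.mem_cycleFactorsFinset_iff.1 hf).2 b hb
        rw [← this]; exact Perm.mem_support.1 hb
      have q2 : Q b' ≠ b' := by
        have := (Perm.mem_cycleFactorsFinset_iff.1 hg).2 b' hb'
        rw [← this]; exact Perm.mem_support.1 hb'
      rw [ef, eg]
      apply Perm.SameCycle.cycleOf_eq
      apply H
      · rintro rfl; exact q1 hX
      · rintro rfl; exact q2 hX
      · rw [sz_support q1, sz_support q2, ← ef, ← eg]; exact he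
    · rw [Multiset.nodup_iff_count_le_one]
      intro a
      rw [Multiset.count_replicate]
      split_ifs
      · by_contra hc
        have : 1 < ((Finset.univ.filter fun a => Q a = a).erase X).card := by
          rw [Finset.card_erase_of_mem (by simpa)]; omega
        obtain ⟨b, hb, b', hb', hne⟩ := Finset.one_lt_card.1 this
        simp at hb hb'
        have := H b b' hb.1 hb'.1 (by rw [sz_fix hb.2, sz_fix hb'.2])
        exact hne (this.eq_of_left hb.2)
      · omega
    · rw [Multiset.disjoint_left]
      intro a ha ha'
      rw [← Perm.cycleType_def] at ha
      have := Perm.two_le_of_mem_cycleType ha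
      have := Multiset.eq_of_mem_replicate ha'
      omega

theorem lam_simple [DecidableEq A] [Nonempty A] {π : RPair A} {S Q : Perm A} (hS : IsS π S) (hQ : IsQ π S Q) :
    (lamOf Q).Nodup ↔ Simple π := by
  rw [lam_iff hQ.1]
  constructor
  · intro h b b' hb hb' he
    rw [eqv_iff hS hQ hb hb']
    rw [cls_eq hS hQ hb, cls_eq hS hQ hb'] at he
    exact h b b' hb hb' he
  · intro h b b' hb hb' he
    rw [← cls_eq hS hQ hb, ← cls_eq hS hQ hb'] at he
    rw [← eqv_iff hS hQ hb hb']
    exact h b b' hb hb' he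

theorem irr_first [Nonempty A] (hN : 2 ≤ Fintype.card A) {π : RPair A} (hπ : PairIrreducible π) :
    (π true).symm (posFirst A) ≠ XOf π := by
  intro h
  have := hπ (posFirst A) (by
    intro x hx
    have hx' : π false x = posFirst A := le_antisymm hx (by rw [Fin.le_def]; simp [posFirst])
    have : x = XOf π := by rw [XOf, Equiv.eq_symm_apply]; exact hx'
    rw [this, ← h, Equiv.apply_symm_apply])
  simp [posFirst] at this
  omega

theorem irr_last [Nonempty A] (hN : 2 ≤ Fintype.card A) {π : RPair A} (hπ : PairIrreducible π) :
    (π true).symm (posLast A) ≠ (π false).symm (posLast A) := by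
  intro h
  have := hπ ⟨Fintype.card A - 2, by omega⟩ (by
    intro x hx
    rw [Fin.le_def] at *
    simp only at *
    by_contra hc
    have hx' : π true x = posLast A := by
      apply Fin.ext; simp only [posLast]; have := (π true x).isLt; omega
    have : x = (π false).symm (posLast A) := by rw [← h, Equiv.eq_symm_apply]; exact hx'
    rw [this, Equiv.apply_symm_apply] at hx
    simp only [posLast] at hx; omega)
  simp at this
  omega

theorem eq_zero_of_PP [DecidableEq A] [Nonempty A] {e : A ≃ Fin (Fintype.card A)} {y : A → ℚ} (h : ∀ b, PP e y b = 0) {b : A}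
    (hb : b ≠ e.symm (posLast A)) : y b = 0 := by
  have h1 : (e b : ℕ) + 1 < Fintype.card A := by
    have h2 := (e b).isLt
    by_contra hc
    apply hb
    rw [Equiv.eq_symm_apply]
    apply Fin.ext; simp only [posLast]; omega
  have := PP_succ (e := e) (a := b) (b := e.symm ⟨_, h1⟩) (by simp) y
  rw [h, h] at this
  linarith

def LL [DecidableEq A] (ν : Perm A) : (A → ℚ) →ₗ[ℚ] (A → ℚ) := Matrix.toLin' (Perm.permMatrix ℚ ν⁻¹)

theorem LL_det [DecidableEq A] (ν : Perm A) : LinearMap.det (LL ν) = ((Perm.sign ν : ℤ) : ℚ) := by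
  rw [LL, LinearMap.det_toLin', Matrix.det_permutation, Perm.sign_inv]

theorem LL_apply [DecidableEq A] (ν : Perm A) (x : A → ℚ) (b : A) : LL ν x (ν b) = x b := by
  rw [LL, Matrix.toLin'_apply, Matrix.permMatrix_mulVec]; simp

theorem PP_rename [DecidableEq A] (π : RPair A) (ν : Perm A) (ε : Bool) (x : A → ℚ) (b : A) :
    PP (pairRename π ν ε) x b = PP (π ε) (LL ν x) (ν b) := by
  unfold PP
  rw [← Equiv.sum_comp ν (fun c => if π ε c < π ε (ν b) then LL ν x c else 0)]
  refine Finset.sum_congr rfl fun c _ => ?_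
  rw [LL_apply]; rfl

theorem BB_rename [DecidableEq A] (π : RPair A) (ν : Perm A) (x y : A → ℚ) :
    BB (pairRename π ν) x y = BB π (LL ν x) (LL ν y) := by
  rw [BB_apply, BB_apply, ← Equiv.sum_comp ν (fun b => LL ν y b * DD π false (LL ν x) b)]
  simp [LL_apply, DD, PP_rename]

theorem upper [DecidableEq A] [Nonempty A] (hN : 2 ≤ Fintype.card A) {π : RPair A} (hπ : PairIrreducible π)
    (hs : Simple π) {ν : Perm A} (hν : pairRename π ν ∈ EClass π) : Perm.sign ν = 1 := by
  obtain ⟨M, h1, h2, f, h3, c, h4⟩ := rel_of_E hν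
  set T := LL ν ∘ₗ M with hT
  have hdet : LinearMap.det T = ((Perm.sign ν : ℤ) : ℚ) := by
    rw [hT, LinearMap.det_comp, h1, LL_det, mul_one]
  have hB : ∀ x y, BB π (T x) (T y) = BB π x y := by
    intro x y
    rw [← h2 x y, BB_rename]; rfl
  have hsurj : Function.Surjective T := by
    have : IsUnit T := by
      rw [LinearMap.isUnit_iff_isUnit_det, hdet]
      rcases Int.units_eq_one_or (Perm.sign ν) with h | h <;> simp [h]
    exact ((Module.End.isUnit_iff _).1 this).2
  have hX : (ν * f) (XOf π) = XOf π := by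
    rw [Perm.mul_apply, h3, XOf, XOf, pairRename]; simp
  have hc : ∀ x, KK π x → ∀ b, b ≠ XOf π → PP (π false) (T x) ((ν * f) b) = PP (π false) x b + c x := by
    intro x hx b hb
    rw [← h4 x hx b hb, PP_rename]; rfl
  have he := fun b b' (hb : b ≠ XOf π) (hb' : b' ≠ XOf π) => eqv_data hsurj hB hc hb hb'
  have hc2 : ∀ x, KK π x → ∀ b, b ≠ XOf π → PP (π false) (T x) b = PP (π false) x b + c x := by
    intro x hx b hb
    rw [← hc x hx b hb]
    have := hs ((ν * f) b) b (by rw [← hX]; exact fun h => hb ((ν * f).injective h)) hb (cls_data hX he hb)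
    exact (this (T x) ((KK_map' hsurj hB x).2 hx)).symm
  have hfix : ∀ x, KK π x → T x = x := by
    intro x hx
    have hTx := (KK_map' hsurj hB x).2 hx
    have hfst : ∀ y, PP (π true) y ((π true).symm (posFirst A)) = 0 := fun y =>
      PP_first (by intro z; rw [Equiv.apply_symm_apply, Fin.le_def]; simp [posFirst]) y
    have hc0 : c x = 0 := by
      have := hc2 x hx _ (irr_first hN hπ)
      rw [hTx, hx, hfst, hfst] at this
      linarith
    have hP0 : ∀ b, PP (π false) (T x) b = PP (π false) x b := by
      intro b
      by_cases hb : b = XOf π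
      · rw [hb, PP_first (XOf_first π), PP_first (XOf_first π)]
      · rw [hc2 x hx b hb, hc0, add_zero]
    have hP1 : ∀ b, PP (π true) (T x) b = PP (π true) x b := by
      intro b; rw [← hTx b, ← hx b, hP0]
    have hsub : ∀ e : A ≃ Fin (Fintype.card A), (∀ b, PP e (T x) b = PP e x b) → ∀ b, PP e (T x + (-1 : ℚ) • x) b = 0 := by
      intro e h b
      rw [PP_add, PP_smul, h]; ring
    have : ∀ b, (T x + (-1 : ℚ) • x) b = 0 := by
      intro b
      by_cases hb : b = (π true).symm (posLast A)
      · exact eq_zero_of_PP (hsub _ hP0) (hb ▸ irr_last hN hπ)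
      · exact eq_zero_of_PP (hsub _ hP1) hb
    funext b
    have := this b
    simp at this
    linarith
  have := det_one_of_alt _ (BB π) (BB_alt π) T hB (fun x hx => hfix x ((KK_iff π x).2 hx)) rfl
  rw [hdet] at this
  rcases Int.units_eq_one_or (Perm.sign ν) with h | h
  · exact h
  · rw [h] at this; norm_num at this

theorem formPerm_mid [DecidableEq A] {L u v : List A} {p q : A} (hn : L.Nodup) (h : L = u ++ p :: q :: v) :
    L.formPerm p = q := by
  have := List.formPerm_apply_lt_getElem L hn u.length (by rw [h]; simp)
  simpa [h] using this

theorem formPerm_last [DecidableEq A] {a p : A} {L u : List A} (h : a :: L = u ++ [p]) :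
    (a :: L).formPerm p = a := by
  cases u with
  | nil => simp at h; obtain ⟨rfl, rfl⟩ := h; simp
  | cons c u =>
    simp at h; obtain ⟨rfl, rfl⟩ := h
    exact List.formPerm_cons_concat_apply_last _ _ _

theorem isPer_sz {Q : Perm A} (b : A) : IsPer Q b (sz Q b) := by
  classical
  have hex : ∃ k, 0 < k ∧ (Q ^ k) b = b := ⟨orderOf Q, orderOf_pos Q, by rw [pow_orderOf_eq_one]; rfl⟩
  have hper : IsPer Q b (Nat.find hex) :=
    ⟨(Nat.find_spec hex).1, (Nat.find_spec hex).2, fun i h0 hi h => Nat.find_min hex hi ⟨h0, h⟩⟩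
  generalize Nat.find hex = k at hper
  have : sz Q b = k := by
    have hset : {c | Q.SameCycle b c} = ((Finset.range k).image fun i => (Q ^ i) b : Finset A) := by
      ext c
      simp only [Set.mem_ofPred_eq, Finset.coe_image, Set.mem_image, Finset.coe_range, Set.mem_Iio]
      constructor
      · intro h
        obtain ⟨n, -, rfl⟩ := h.exists_pow_eq'
        refine ⟨n % k, Nat.mod_lt _ hper.1, ?_⟩
        have h2 : ∀ m, ((Q ^ k) ^ m) b = b := by
          intro m
          induction m with
          | zero => rfl
          | succ m ih => rw [pow_succ, Perm.mul_apply, hper.2.1, ih]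
        conv_rhs => rw [← Nat.mod_add_div n k, pow_add, Perm.mul_apply, pow_mul, h2]
      · rintro ⟨i, -, rfl⟩
        exact ⟨i, by simp⟩
    rw [sz, hset, Set.ncard_coe_finset, Finset.card_image_of_injOn, Finset.card_range]
    intro i hi j hj hij
    simp at hi hj
    rcases lt_trichotomy i j with h | h | h
    · exact absurd hij (hper.pow_ne h hj)
    · exact h
    · exact absurd hij.symm (hper.pow_ne h hi)
  rw [this]; exact hper

theorem IsPer.conj {Q k τ : Perm A} {b : A} {n : ℕ} (h : IsPer Q b n) (hQ : Q = k * τ * k⁻¹) : IsPer τ (k⁻¹ b) n := by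
  subst hQ
  have e : ∀ i : ℕ, ((k * τ * k⁻¹) ^ i) b = b ↔ (τ ^ i) (k⁻¹ b) = k⁻¹ b := by
    intro i
    rw [conj_pow, Perm.mul_apply, Perm.mul_apply, Perm.eq_inv_iff_eq]
  exact ⟨h.1, (e n).1 h.2.1, fun i h0 hi hh => h.2.2 i h0 hi ((e i).2 hh)⟩

theorem IsPer.inv {τ : Perm A} {b : A} {n : ℕ} (h : IsPer τ⁻¹ b n) : IsPer τ b n := by
  have e : ∀ i : ℕ, (τ⁻¹ ^ i) b = b ↔ (τ ^ i) b = b := by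
    intro i
    rw [inv_pow, Perm.inv_eq_iff_eq, eq_comm]
  exact ⟨h.1, (e n).1 h.2.1, fun i h0 hi hh => h.2.2 i h0 hi ((e i).2 hh)⟩

theorem std_SQ [DecidableEq A] [Nonempty A] {π : RPair A} {a z : A} {W V : List A}
    (h : IsP π false (a :: (W ++ [z])) (z :: (V ++ [a]))) :
    let g := (a :: W).formPerm * (V ++ [a]).formPerm⁻¹
    XOf π = a ∧ IsS π (swap z a * g) ∧ IsQ π (swap z a * g) (swap z a * g * swap z a) := by
  have hn0 := toL_nodup (π false)
  rw [h.1] at hn0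
  have hn1 := toL_nodup (π true)
  rw [show toL (π true) = _ from h.2] at hn1
  have hza : z ≠ a := by rintro rfl; simp at hn0
  have hnP : (a :: W).Nodup := by
    have : (a :: W ++ [z]).Nodup := hn0
    exact (List.nodup_append.1 this).1
  have hzP : z ∉ a :: W := by
    have : (a :: W ++ [z]).Nodup := hn0
    intro hz; exact (List.nodup_append.1 this).2.2 _ hz _ (by simp) rfl
  have hnU := (List.nodup_cons.1 hn1).2
  have hzU := (List.nodup_cons.1 hn1).1
  have hX : XOf π = a := XOf_eq (π := π) h.1
  have hL0 : (π false).symm (posLast A) = z := by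
    rw [Equiv.symm_apply_eq]
    apply Fin.ext
    rw [toL_pos (e := π false) (u := a :: W) (v := []) h.1]
    have := toL_length (π false)
    rw [h.1] at this
    simp at this
    simp [posLast]; omega
  have hL1 : (π true).symm (posLast A) = a := by
    rw [Equiv.symm_apply_eq]
    apply Fin.ext
    rw [toL_pos (e := π true) (u := z :: V) (v := []) h.2]
    have := toL_length (π true)
    rw [show toL (π true) = _ from h.2] at this
    simp at this
    simp [posLast]; omega
  have pa : (π false a : ℕ) = 0 := toL_pos (e := π false) (u := []) h.1
  have pz : (π true z : ℕ) = 0 := toL_pos (e := π true) (u := []) h.2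
  have hA : ∀ p, p ≠ z → (π false (swap z a ((a :: W).formPerm p)) : ℕ) = π false p + 1 := by
    intro p hp
    have hpP : p ∈ a :: W := by
      have := mem_toL (π false) p
      rw [h.1] at this
      simp [hp] at this; simpa using this
    obtain ⟨u, v, huv⟩ := List.append_of_mem hpP
    have h1 : toL (π false) = u ++ p :: (v ++ [z]) := by
      rw [h.1, ← List.cons_append, huv]; simp
    rw [toL_pos h1]
    cases v with
    | nil =>
      rw [formPerm_last huv, swap_apply_right]
      rw [toL_pos (e := π false) (u := u ++ [p]) (v := []) (by simpa using h1)]; simp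
    | cons q v =>
      rw [formPerm_mid hnP huv]
      have hqa : q ≠ a := by
        rintro rfl
        cases u with
        | nil => simp at huv; obtain ⟨rfl, rfl⟩ := huv; simp at hnP
        | cons c u => simp at huv; obtain ⟨rfl, rfl⟩ := huv; simp at hnP
      have hqz : q ≠ z := by
        rintro rfl; rw [huv] at hzP; simp at hzP
      rw [swap_apply_of_ne_of_ne hqz hqa, toL_pos (e := π false) (u := u ++ [p]) (v := v ++ [z]) (by simpa using h1)]; simp
  have hB : ∀ p, p ≠ z → p ≠ a → (π true ((V ++ [a]).formPerm p) : ℕ) = π true p + 1 := by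
    intro p hp hpa
    have hpV : p ∈ V := by
      have := mem_toL (π true) p
      rw [show toL (π true) = _ from h.2] at this
      simpa [hp, hpa] using this
    obtain ⟨u, v, rfl⟩ := List.append_of_mem hpV
    have h1 : toL (π true) = (z :: u) ++ p :: (v ++ [a]) := by
      rw [show toL (π true) = _ from h.2]; simp
    rw [toL_pos h1]
    obtain ⟨q, v', hv⟩ : ∃ q v', v ++ [a] = q :: v' := by cases v <;> simp
    rw [formPerm_mid (u := u) (v := v') (q := q) hnU (by simp [← hv])]
    rw [hv] at h1
    rw [toL_pos (e := π true) (u := z :: u ++ [p]) (v := v') (by simpa using h1)]; simp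
  have hB2 : (π true ((V ++ [a]).formPerm a) : ℕ) = 1 := by
    obtain ⟨q, v', hv⟩ : ∃ q v', V ++ [a] = q :: v' := by cases V <;> simp
    have h1 : toL (π true) = [z] ++ q :: v' := by rw [show toL (π true) = _ from h.2, hv]; rfl
    have := formPerm_last (a := q) (L := v') (u := V) (p := a) hv.symm
    rw [← hv] at this
    rw [this, toL_pos h1]; rfl
  have c0z : (a :: W).formPerm z = z := List.formPerm_apply_of_notMem hzP
  have c1z : (V ++ [a]).formPerm z = z := List.formPerm_apply_of_notMem hzU
  intro g
  have gz : g z = z := by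
    have : (V ++ [a]).formPerm⁻¹ z = z := by rw [Perm.inv_eq_iff_eq, c1z]
    simp only [g, Perm.mul_apply, this, c0z]
  refine ⟨hX, ?_, ?_, ?_⟩
  · intro b
    obtain ⟨p, rfl⟩ := (V ++ [a]).formPerm.surjective b
    rw [hL0, hL1]
    have hSb : (swap z a * g) ((V ++ [a]).formPerm p) = swap z a ((a :: W).formPerm p) := by simp [g]
    rw [hSb]
    by_cases hp : p = z
    · subst hp
      rw [c1z, c0z]
      refine ⟨fun _ => by rw [swap_apply_left]; exact hX.symm, fun hh => absurd (Fin.ext pz) hh⟩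
    · refine ⟨fun hh => ?_, fun _ => ⟨fun hh => ?_, fun hh => ?_⟩⟩
      · exfalso
        apply hp
        apply (V ++ [a]).formPerm.injective
        rw [c1z]
        apply (π true).injective
        rw [hh]; exact (Fin.ext pz).symm
      · have : p = a := by
          by_contra hpa
          rw [hB p hp hpa] at hh
          exact pos_ne (e := π true) hp (by omega)
        rw [hA p hp, this]
      · have hpa : p ≠ a := by
          rintro rfl
          rw [hB2, pz] at hh; exact hh rfl
        rw [hA p hp]
        congr 3
        rw [Equiv.eq_symm_apply]
        apply Fin.ext
        simp [hB p hp hpa]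
  · rw [hX]; simp [gz]
  · intro b hb
    rw [hX] at hb ⊢
    by_cases hbz : b = z
    · subst hbz
      simp [gz]
    · have e1 : swap z a b = b := swap_apply_of_ne_of_ne hbz hb
      refine ⟨fun hh => ?_, fun _ => by simp [e1]⟩
      exfalso
      apply hbz
      apply g.injective
      rw [gz]
      apply (swap z a).injective
      rw [swap_apply_left]; exact hh

theorem lower_odd [DecidableEq A] [Nonempty A] {π : RPair A} {a z : A} {W V : List A}
    (h : RL π false (a :: (W ++ [z])) (z :: (V ++ [a]))) (hs : ¬ Simple π) : ∃ ν ∈ GG π, Perm.sign ν = -1 := by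
  obtain ⟨π', h1, h2⟩ := id h
  obtain ⟨hX, hS, hQ⟩ := std_SQ h1
  have hs' : ¬ Simple π' := fun hh => hs (simple_of_E h2 hh)
  rw [← lam_simple hS hQ, lam_iff hQ.1, hX] at hs'
  push Not at hs'
  obtain ⟨b, b', hb, hb', hsz, hsc⟩ := hs'
  set c0 := (a :: W).formPerm with hc0
  set c1 := (V ++ [a]).formPerm with hc1
  have hn0 : (a :: W ++ [z]).Nodup := h.nodup
  have hnP : (a :: W).Nodup := (List.nodup_append.1 hn0).1
  have hzP : z ∉ a :: W := by
    intro hz; exact (List.nodup_append.1 hn0).2.2 _ hz _ (by simp) rfl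
  have c0z : c0 z = z := List.formPerm_apply_of_notMem hzP
  set k := swap z a * c0 with hk
  have hconj : swap z a * (c0 * c1⁻¹) * swap z a = k * (c0⁻¹ * c1)⁻¹ * k⁻¹ := by
    rw [hk]; simp [mul_assoc]
  have hkz : k⁻¹ a = z := by
    rw [Perm.inv_eq_iff_eq, hk, Perm.mul_apply, c0z, swap_apply_left]
  have hmem : ∀ x, x ≠ a → k⁻¹ x ∈ a :: W := by
    intro x hx
    have h3 : k⁻¹ x ≠ z := by rw [← hkz]; exact fun h => hx (k⁻¹.injective h)
    have := h.mem (k⁻¹ x)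
    generalize k⁻¹ x = y at *
    simp [h3] at this; simpa using this
  have p1 := ((isPer_sz b).conj hconj).inv
  have p2 := ((isPer_sz b').conj hconj).inv
  rw [← hsz] at p2
  have hcyc := (List.Nodup.isCycleOn_formPerm hnP).2 (hmem b hb) (hmem b' hb')
  obtain ⟨d, -, hd⟩ := hcyc.exists_pow_eq'
  have hsc' : ¬ (c0⁻¹ * c1).SameCycle (k⁻¹ b) (k⁻¹ b') := by
    rwa [← Perm.sameCycle_inv, ← Perm.sameCycle_conj, ← hconj]
  rw [← hd] at p2 hsc'
  have hR : RS π z 1 c0 c1 := ⟨a :: W, V ++ [a], 1, by rw [pairRename_one]; simpa using h, rfl, rfl, by simp⟩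
  obtain ⟨s, d0, d1, r1, r2⟩ := odd_main (RS π z) (fun s c0 c1 w hh hw => RS.step s c0 c1 w hh hw) d c0 c1 1 _ _ hR p1 p2 hsc'
  exact RS.odd r1 r2

/-- `G(π) = Alt(A)` if `Λ(π)` is simple, and `G(π) = Sym(A)` otherwise. -/
theorem stmt1 {A : Type*} [Fintype A] [DecidableEq A] [Nonempty A]
    (hN : 2 ≤ Fintype.card A) (π : RPair A) (hπ : PairIrreducible π)
    (S Q : Equiv.Perm A) (hS : IsS π S) (hQ : IsQ π S Q) :
    ((lamOf Q).Nodup → renamings π = (alternatingGroup A : Set (Equiv.Perm A))) ∧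
    (¬ (lamOf Q).Nodup → renamings π = Set.univ) := by
  obtain ⟨a, z, W, V, hst, -⟩ := exists_standard hN hπ
  have halt : alternatingGroup A ≤ GG π :=
    alt_le_GG (z := z) (P := a :: W) (U := V ++ [a]) (by simpa using hst)
  rw [lam_simple hS hQ]
  refine ⟨fun hs => ?_, fun hs => ?_⟩
  · apply Set.Subset.antisymm
    · intro ν hν
      exact Perm.mem_alternatingGroup.2 (upper hN hπ hs hν)
    · intro ν hν
      exact halt hν
  · obtain ⟨ν, h1, h2⟩ := lower_odd hst hs
    have := GG_top_of_odd halt h1 h2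
    rw [Set.eq_univ_iff_forall]
    intro σ
    have h3 : σ ∈ GG π := by rw [this]; trivial
    exact h3
end

section
/- Every Rauzy class contains a standard pair: for every irreducible pair π on a finite alphabet A there exists ρ ∈ R(π) with ρ₀(ρ₁⁻¹(1)) = ρ₁(ρ₀⁻¹(1)) = N. -/
open Equiv

variable {A : Type*} [Fintype A]

theorem aux_card {n : ℕ} {B : Type*} [Fintype B] (e f : B ≃ Fin n) (k : ℕ)
    (h : ∀ x, (e x : ℕ) < k → (f x : ℕ) < k) : ∀ x, (f x : ℕ) < k → (e x : ℕ) < k := by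
  classical
  have hc : ∀ g : B ≃ Fin n, (Finset.univ.filter fun x => (g x : ℕ) < k).card
      = (Finset.univ.filter fun i : Fin n => (i : ℕ) < k).card := by
    intro g
    refine Finset.card_equiv g ?_
    intro i
    simp
  have hs : (Finset.univ.filter fun x => (e x : ℕ) < k) ⊆
      (Finset.univ.filter fun x => (f x : ℕ) < k) := by
    intro x hx
    simp only [Finset.mem_filter, Finset.mem_univ, true_and] at hx ⊢
    exact h x hx
  have heq := Finset.eq_of_subset_of_card_le hs (by rw [hc e, hc f])
  intro x hx
  have : x ∈ (Finset.univ.filter fun x => (f x : ℕ) < k) := by simpa using hx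
  rw [← heq] at this
  simpa using this

def GoodPair {B : Type*} [Fintype B] (π : RPair B) : Prop :=
  ∀ (ε : Bool) (k : ℕ), 0 < k → k < Fintype.card B →
    ∃ x, (π ε x : ℕ) < k ∧ k ≤ (π (!ε) x : ℕ)

theorem good_of_one {B : Type*} [Fintype B] (π : RPair B) (ε : Bool)
    (h : ∀ k : ℕ, 0 < k → k < Fintype.card B →
      ∃ x, (π ε x : ℕ) < k ∧ k ≤ (π (!ε) x : ℕ)) : GoodPair π := by
  intro δ k h0 hk
  by_cases hδ : δ = ε
  · subst hδ; exact h k h0 hk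
  · have hδ' : δ = !ε := by cases δ <;> cases ε <;> simp_all
    subst hδ'
    by_contra hc
    push Not at hc
    rw [Bool.not_not] at hc
    have := aux_card (π (!ε)) (π ε) k hc
    obtain ⟨x, h1, h2⟩ := h k h0 hk
    have := this x h1
    omega

theorem good_of_irr {B : Type*} [Fintype B] (π : RPair B) (h : PairIrreducible π) :
    GoodPair π := by
  apply good_of_one π false
  intro k h0 hk
  by_contra hc
  push Not at hc
  have := h ⟨k - 1, by omega⟩ (by
    intro x hx
    rw [Fin.le_def] at hx ⊢
    have := hc x (by simp only at hx; omega)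
    simp only [Bool.not_false] at this
    simp only
    omega)
  simp only at this
  omega

theorem good_pres {B : Type*} [Fintype B] (π π' : RPair B) (ε : Bool) (z : B)
    (hz : (π ε z : ℕ) + 1 = Fintype.card B) (h : GoodPair π) (h1 : π' ε = π ε)
    (h2 : ∀ b, (π (!ε) b : ℕ) ≤ π (!ε) z → π' (!ε) b = π (!ε) b) : GoodPair π' := by
  apply good_of_one π' ε
  intro k h0 hk
  by_contra hc
  push Not at hc
  have hr := aux_card _ _ k hc
  have hzk : k ≤ (π (!ε) z : ℕ) := by
    by_contra hlt
    have := hr z (by rw [h2 z le_rfl]; omega)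
    rw [h1] at this
    omega
  obtain ⟨x, hx1, hx2⟩ := h ε k h0 hk
  have hx3 := hc x (by rw [h1]; exact hx1)
  have hy : π (!ε) ((π (!ε)).symm (π' (!ε) x)) = π' (!ε) x := by simp
  generalize (π (!ε)).symm (π' (!ε) x) = y at hy
  have := h2 y (by rw [hy]; omega)
  rw [hy] at this
  have := (π' (!ε)).injective this
  subst this
  rw [hy] at hx2
  omega

theorem rot_exists (n k : ℕ) : ∃ σ : Equiv.Perm (Fin n), ∀ i : Fin n,
    ((i : ℕ) ≤ k → σ i = i) ∧ (k < (i : ℕ) → (i : ℕ) + 1 = n → (σ i : ℕ) = k + 1) ∧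
    (k < (i : ℕ) → (i : ℕ) + 1 ≠ n → (σ i : ℕ) = i + 1) := by
  let f : Fin n → Fin n := fun i =>
    if h : (i : ℕ) ≤ k then i else if h2 : (i : ℕ) + 1 = n then ⟨k + 1, by omega⟩
      else ⟨i + 1, by omega⟩
  have hf : Function.Injective f := by
    intro i j hij
    simp only [f] at hij
    apply Fin.ext
    split_ifs at hij <;> simp only [Fin.ext_iff] at hij <;> omega
  refine ⟨Equiv.ofBijective f (Finite.injective_iff_bijective.mp hf), ?_⟩
  intro i
  simp only [Equiv.ofBijective_apply, f]
  refine ⟨fun h => by simp [h], fun h h2 => ?_, fun h h2 => ?_⟩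
  · rw [dif_neg (by omega), dif_pos h2]
  · rw [dif_neg (by omega), dif_neg h2]

theorem step_exists {B : Type*} [Fintype B] (π : RPair B) (ε : Bool) (z c : B)
    (hz : (π ε z : ℕ) + 1 = Fintype.card B) (hc : (π (!ε) z : ℕ) < π (!ε) c)
    (hc2 : (π (!ε) c : ℕ) + 1 ≠ Fintype.card B) :
    ∃ π' : RPair B, RightMove π π' ∧ π' ε = π ε ∧
      (∀ b, (π (!ε) b : ℕ) ≤ π (!ε) z → π' (!ε) b = π (!ε) b) ∧
      (π' (!ε) c : ℕ) = π (!ε) c + 1 := by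
  obtain ⟨σ, hσ⟩ := rot_exists (Fintype.card B) (π (!ε) z)
  let π' : RPair B := fun e => if e = ε then π e else (π e).trans σ
  have e1 : π' ε = π ε := by simp [π']
  have e2 : ∀ b, π' (!ε) b = σ (π (!ε) b) := by intro b; simp [π']
  have hlt := (π (!ε) c).isLt
  let l : Fin (Fintype.card B) := ⟨Fintype.card B - 1, by omega⟩
  have hl : (π (!ε) ((π (!ε)).symm l) : ℕ) + 1 = Fintype.card B := by
    simp only [Equiv.apply_symm_apply, l]; omega
  generalize (π (!ε)).symm l = w at hl
  refine ⟨π', ⟨ε, z, w, ?_, ?_, e1, ?_, ?_, ?_⟩, e1, ?_, ?_⟩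
  · intro x; rw [Fin.le_def]; have := (π ε x).isLt; omega
  · intro x; rw [Fin.le_def]; have := (π (!ε) x).isLt; omega
  · intro b hb; rw [e2]; exact (hσ _).1 hb
  · rw [e2]; exact (hσ _).2.1 (by omega) hl
  · intro b hb hbw
    rw [e2]
    rw [Fin.le_def] at hb
    refine (hσ _).2.2 (by omega) ?_
    intro h
    exact hbw ((π (!ε)).injective (Fin.ext (by omega)))
  · intro b hb; rw [e2]; exact (hσ _).1 hb
  · rw [e2]; exact (hσ _).2.2 hc hc2

theorem rot_reach {B : Type*} [Fintype B] (m : ℕ) : ∀ (π : RPair B) (ε : Bool) (z c : B),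
    (π ε z : ℕ) + 1 = Fintype.card B → (π (!ε) z : ℕ) < π (!ε) c →
    (π (!ε) c : ℕ) + 1 + m = Fintype.card B →
    ∃ π' : RPair B, Relation.ReflTransGen RightMove π π' ∧ π' ε = π ε ∧
      (∀ b, (π (!ε) b : ℕ) ≤ π (!ε) z → π' (!ε) b = π (!ε) b) ∧
      (π' (!ε) c : ℕ) + 1 = Fintype.card B := by
  induction m with
  | zero =>
    intro π ε z c _ _ h
    exact ⟨π, .refl, rfl, fun _ _ => rfl, h⟩
  | succ m ih =>
    intro π ε z c hz hc h
    obtain ⟨π₁, hm, h1, h2, h3⟩ := step_exists π ε z c hz hc (by omega)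
    have hzz := h2 z le_rfl
    obtain ⟨π₂, g0, g1, g2, g3⟩ := ih π₁ ε z c (by rw [h1]; exact hz)
      (by rw [hzz]; omega) (by omega)
    refine ⟨π₂, .head hm g0, g1.trans h1, ?_, g3⟩
    intro b hb
    rw [g2 b (by rw [h2 b hb, hzz]; exact hb), h2 b hb]

theorem standard_of {B : Type*} [Fintype B] [Nonempty B] (ρ : RPair B) (ε : Bool) (a b : B)
    (h1 : (ρ ε a : ℕ) = 0) (h2 : (ρ (!ε) a : ℕ) + 1 = Fintype.card B)
    (h3 : (ρ (!ε) b : ℕ) = 0) (h4 : (ρ ε b : ℕ) + 1 = Fintype.card B) : PairStandard ρ := by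
  have key : ∀ (δ δ' : Bool) (x : B), (ρ δ x : ℕ) = 0 → (ρ δ' x : ℕ) + 1 = Fintype.card B →
      ρ δ' ((ρ δ).symm (posFirst B)) = posLast B := by
    intro δ δ' x hx hy
    have : ρ δ x = posFirst B := Fin.ext (by simpa [posFirst] using hx)
    rw [← this, Equiv.symm_apply_apply]
    apply Fin.ext
    simp only [posLast]
    omega
  cases ε
  · exact ⟨key _ _ b h3 h4, key _ _ a h1 h2⟩
  · exact ⟨key _ _ a h1 h2, key _ _ b h3 h4⟩

theorem main_ind {B : Type*} [Fintype B] [Nonempty B] (hN : 2 ≤ Fintype.card B) (k : ℕ) :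
    ∀ (π : RPair B) (ε : Bool) (z : B), GoodPair π →
    (π ε z : ℕ) + 1 = Fintype.card B → (π (!ε) z : ℕ) = k →
    ∃ ρ, Relation.ReflTransGen RightMove π ρ ∧ PairStandard ρ := by
  induction k using Nat.strong_induction_on with
  | _ k ih =>
  intro π ε z hg hz hk
  rcases Nat.eq_zero_or_pos k with h0 | h0
  · have ha : (π ε ((π ε).symm (posFirst B)) : ℕ) = 0 := by simp [posFirst]
    generalize (π ε).symm (posFirst B) = a at ha
    have haz : (π (!ε) z : ℕ) < π (!ε) a := by
      by_contra hlt
      have : a = z := (π (!ε)).injective (Fin.ext (by omega))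
      subst this
      omega
    have hlt := (π (!ε) a).isLt
    obtain ⟨ρ, r0, r1, r2, r3⟩ := rot_reach (Fintype.card B - 1 - π (!ε) a) π ε z a hz haz
      (by omega)
    refine ⟨ρ, r0, standard_of ρ ε a z (by rw [r1]; exact ha) r3 ?_ (by rw [r1]; exact hz)⟩
    rw [r2 z le_rfl]; omega
  · have hkN : k < Fintype.card B := by have := (π (!ε) z).isLt; omega
    obtain ⟨c, hc1, hc2⟩ := hg ε k h0 hkN
    have hcz : (π (!ε) z : ℕ) < π (!ε) c := by
      by_contra hlt
      have : c = z := (π (!ε)).injective (Fin.ext (by omega))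
      subst this
      omega
    have hlt := (π (!ε) c).isLt
    obtain ⟨π', r0, r1, r2, r3⟩ := rot_reach (Fintype.card B - 1 - π (!ε) c) π ε z c hz hcz
      (by omega)
    have hg' := good_pres π π' ε z hz hg r1 r2
    obtain ⟨ρ, s0, s1⟩ := ih (π ε c) hc1 π' (!ε) c hg' r3 (by rw [Bool.not_not, r1])
    exact ⟨ρ, r0.trans s0, s1⟩

/-- every Rauzy class contains a standard pair. -/
theorem stmt3 {A : Type*} [Fintype A] [DecidableEq A] [Nonempty A]
    (hN : 2 ≤ Fintype.card A) (π : RPair A) (hπ : PairIrreducible π) :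
    ∃ ρ ∈ RClass π, PairStandard ρ := by
  have hz : (π false ((π false).symm (posLast A)) : ℕ) + 1 = Fintype.card A := by
    simp only [Equiv.apply_symm_apply, posLast]; omega
  obtain ⟨ρ, h1, h2⟩ := main_ind hN _ π false _ (good_of_irr π hπ) hz rfl
  exact ⟨ρ, h1, h2⟩
end

section
/- Let π be an irreducible pair on a finite alphabet A. For every ρ ∈ R(π) one has S(ρ) = S(π); consequently X(ρ) = X(π) and Q(ρ) = Q(π). -/
open Equiv

variable {A : Type*} [Fintype A]

theorem isS_iff {A : Type*} [Fintype A] [Nonempty A] (π : RPair A) (S : Equiv.Perm A)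
    (z0 z1 : A) (h0 : (π false z0 : ℕ) + 1 = Fintype.card A)
    (h1 : (π true z1 : ℕ) + 1 = Fintype.card A) :
    IsS π S ↔ ∀ b, ((π true b : ℕ) = 0 → (π false (S b) : ℕ) = 0) ∧
      ∀ a, (π true b : ℕ) = (π true a : ℕ) + 1 →
        (a = z0 → (π false (S b) : ℕ) = (π false z1 : ℕ) + 1) ∧
        (a ≠ z0 → (π false (S b) : ℕ) = (π false a : ℕ) + 1) := by
  have e0 : (π false).symm (posLast A) = z0 := by
    rw [Equiv.symm_apply_eq]; apply Fin.ext; simp only [posLast]; omega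
  have e1 : (π true).symm (posLast A) = z1 := by
    rw [Equiv.symm_apply_eq]; apply Fin.ext; simp only [posLast]; omega
  have inj : ∀ a b : A, (π true a : ℕ) = (π true b : ℕ) → a = b := fun a b h =>
    (π true).injective (Fin.ext h)
  unfold IsS
  rw [e0, e1]
  refine forall_congr' fun b => ?_
  have f0 : π true b = posFirst A ↔ (π true b : ℕ) = 0 := by
    rw [Fin.ext_iff]; rfl
  have f1 : S b = (π false).symm (posFirst A) ↔ (π false (S b) : ℕ) = 0 := by
    rw [Equiv.eq_symm_apply, Fin.ext_iff]; rfl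
  rw [Ne, f0, f1]
  refine and_congr_right fun _ => ?_
  obtain ⟨c, hc⟩ : ∃ c, (π true).symm ⟨(π true b : ℕ) - 1,
              Nat.lt_of_le_of_lt (Nat.sub_le _ _) (π true b).isLt⟩ = c := ⟨_, rfl⟩
  have hc' : (π true c : ℕ) = (π true b : ℕ) - 1 := by
    rw [← hc]; simp
  rw [hc]
  constructor
  · intro h a ha
    have : a = c := inj _ _ (by omega)
    subst this
    obtain ⟨k1, k2⟩ := h (by omega)
    refine ⟨fun e => k1 (by rw [← e]; exact ha), fun e => k2 fun e' => e (inj _ _ (by omega))⟩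
  · intro h hb
    obtain ⟨k1, k2⟩ := h c (by omega)
    refine ⟨fun e => k1 (inj _ _ (by omega)), fun e => k2 ?_⟩
    rintro rfl
    omega

theorem last_of_max {A : Type*} [Fintype A] (f : A ≃ Fin (Fintype.card A)) (z : A)
    (h : ∀ x, f x ≤ f z) : (f z : ℕ) + 1 = Fintype.card A := by
  have hz := (f z).isLt
  have := h (f.symm ⟨Fintype.card A - 1, by omega⟩)
  rw [Equiv.apply_symm_apply, Fin.le_def] at this
  simp only at this
  omega

theorem step_nat {A : Type*} (N : ℕ) (p q : A → ℕ) (zc zo y : A)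
    (pl : ∀ a, p a < N) (ql : ∀ a, q a < N)
    (hp : p zo + 1 = N) (hq : q y + 1 = N)
    (h1 : ∀ b, p b ≤ p zc → q b = p b) (h2 : q zo = p zc + 1)
    (h3 : ∀ b, ¬ p b ≤ p zc → b ≠ zo → q b = p b + 1) :
    p zc < p zo ∧ (zo ≠ y → p zo = p y + 1) := by
  have h4 : p zc < p zo := by
    by_contra h
    have := ql zo
    have := pl zc
    omega
  refine ⟨h4, fun h => ?_⟩
  by_cases hy : p y ≤ p zc
  · have := h1 y hy; have := ql zo; omega
  · have := h3 y hy (Ne.symm h); omega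

theorem step {A : Type*} [Fintype A] [Nonempty A] (π π' : RPair A) (S : Equiv.Perm A)
    (h : RightMove π π') (hS : IsS π S) : IsS π' S ∧ XOf π' = XOf π := by
  obtain ⟨ε, zc, zo, hc, ho, he, h1, h2, h3⟩ := h
  have lc := last_of_max _ _ hc
  have lo := last_of_max _ _ ho
  have lc' : (π' ε zc : ℕ) + 1 = Fintype.card A := by rw [he]; exact lc
  obtain ⟨y, hy⟩ : ∃ y, (π' (!ε) y : ℕ) + 1 = Fintype.card A :=
    ⟨(π' (!ε)).symm (posLast A), by
      rw [Equiv.apply_symm_apply]; simp only [posLast]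
      have := Fintype.card_pos (α := A); omega⟩
  have inj : ∀ (π : RPair A) ε, ∀ a b : A, (π ε a : ℕ) = (π ε b : ℕ) → a = b := fun π ε a b h =>
    (π ε).injective (Fin.ext h)
  have h1' : ∀ b, (π (!ε) b : ℕ) ≤ π (!ε) zc → (π' (!ε) b : ℕ) = π (!ε) b := fun b hb => by
    rw [h1 b hb]
  have h3' : ∀ b, ¬ (π (!ε) b : ℕ) ≤ π (!ε) zc → b ≠ zo → (π' (!ε) b : ℕ) = π (!ε) b + 1 :=
    fun b hb => h3 b hb
  have he' : ∀ b, (π' ε b : ℕ) = π ε b := fun b => by rw [he]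
  obtain ⟨k1, k2⟩ := step_nat (Fintype.card A) (fun a => (π (!ε) a : ℕ)) (fun a => (π' (!ε) a : ℕ))
    zc zo y (fun a => (π _ a).isLt) (fun a => (π' _ a).isLt) lo hy h1' h2 h3'
  have i1 := inj π false
  have i2 := inj π true
  have i3 := inj π' false
  have i4 := inj π' true
  have b1 := fun a => (π false a).isLt
  have b2 := fun a => (π true a).isLt
  clear h1 h3 hc ho inj
  cases ε
  · simp only [Bool.not_false] at *
    refine ⟨?_, by unfold XOf; rw [he]⟩
    rw [isS_iff π S zc zo lc lo] at hS
    rw [isS_iff π' S zc y lc' hy]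
    clear he
    intro b
    obtain ⟨s1, s2⟩ := hS b
    have A1 := h1' b
    have A3 := h3' b
    refine ⟨by have D := he' (S b); clear h1' h3' i1 i2 i3 i4 he' s2 hS b1 b2; intro hb; by_cases hz : b = zo <;> grind, fun a ha => ?_⟩
    have B1 := h1' a
    have B3 := h3' a
    have t1 := s2 a
    have t2 := s2 zc
    have t3 := s2 y
    have C1 := h1' y
    have C3 := h3' y
    have j1 := i2 b zo
    have j2 := i2 a zc
    have j3 := i2 a y
    have D := he' (S b)
    have D1 := he' a
    have D2 := he' y
    have D3 := b2 b
    have D4 := b2 a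
    clear h1' h3' i1 i2 i3 i4 he' s2 hS b1 b2
    by_cases e1 : b = zo <;> by_cases e2 : a = zc <;> by_cases e3 : a = zo <;>
      by_cases e4 : y = zo <;> by_cases e5 : a = y <;> by_cases e6 : S b = zo <;> grind
  · simp only [Bool.not_true] at *
    constructor
    · rw [isS_iff π S zo zc lo lc] at hS
      rw [isS_iff π' S y zc hy lc']
      clear he
      intro b
      obtain ⟨s1, s2⟩ := hS b
      have A1 := h1' (S b)
      have A3 := h3' (S b)
      have E := he' b
      refine ⟨by have D := he' (S b); clear h1' h3' i1 i2 i3 i4 he' s2 hS b1 b2; intro hb; by_cases hz : b = zo <;> grind, fun a ha => ?_⟩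
      have t1 := s2 a
      have B1 := h1' a
      have B3 := h3' a
      have C1 := h1' y
      have C3 := h3' y
      have j1 := i1 (S b) zo
      have j2 := i1 a zc
      have j3 := i1 a y
      have j4 := i2 a zc
      have D1 := he' a
      have D2 := b2 b
      have D4 := b1 a
      have D5 := b1 (S b)
      have D6 := h1' zc
      clear h1' h3' i1 i2 i3 i4 he' s2 hS b1 b2
      by_cases e1 : b = zo <;> by_cases e2 : a = zc <;> by_cases e3 : a = zo <;>
        by_cases e4 : y = zo <;> by_cases e5 : a = y <;> by_cases e6 : S b = zo <;> grind
    · unfold XOf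
      rw [Equiv.symm_apply_eq]
      obtain ⟨x, hx⟩ : ∃ x, (π false).symm (posFirst A) = x := ⟨_, rfl⟩
      rw [hx]
      rw [Equiv.symm_apply_eq, Fin.ext_iff] at hx
      have hx : 0 = (π false x : ℕ) := hx
      apply Fin.ext
      rw [h1' x (by omega)]
      exact hx

theorem isS_unique {A : Type*} [Fintype A] [Nonempty A] (π : RPair A) (S S' : Equiv.Perm A)
    (h : IsS π S) (h' : IsS π S') : S' = S := by
  ext b
  obtain ⟨a1, a2⟩ := h b
  obtain ⟨a1', a2'⟩ := h' b
  by_cases hb : π true b = posFirst A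
  · rw [a1 hb, a1' hb]
  · obtain ⟨c1, c2⟩ := a2 hb
    obtain ⟨c1', c2'⟩ := a2' hb
    apply (π false).injective
    apply Fin.ext
    by_cases hc : (π true b : ℕ) = (π true ((π false).symm (posLast A)) : ℕ) + 1
    · rw [c1 hc, c1' hc]
    · rw [c2 hc, c2' hc]

/-- for `ρ ∈ R(π)` one has `S(ρ) = S(π)`, hence `X(ρ) = X(π)` and
`Q(ρ) = Q(π)`. -/
theorem stmt4 {A : Type*} [Fintype A] [DecidableEq A] [Nonempty A]
    (hN : 2 ≤ Fintype.card A) (π ρ : RPair A) (hπ : PairIrreducible π)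
    (hρ : ρ ∈ RClass π)
    (S S' Q Q' : Equiv.Perm A)
    (hS : IsS π S) (hS' : IsS ρ S') (hQ : IsQ π S Q) (hQ' : IsQ ρ S' Q') :
    S' = S ∧ XOf ρ = XOf π ∧ Q' = Q := by
  have key : IsS ρ S ∧ XOf ρ = XOf π := by
    have hρ : Relation.ReflTransGen RightMove π ρ := hρ
    clear hS' hQ'
    induction hρ with
    | refl => exact ⟨hS, rfl⟩
    | tail _ hm ih =>
      obtain ⟨u, v⟩ := step _ _ S hm (ih (by assumption)).1
      exact ⟨u, v.trans (ih (by assumption)).2⟩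
  obtain ⟨k, hX⟩ := key
  have hSS := isS_unique ρ S S' k hS'
  subst hSS
  refine ⟨rfl, hX, ?_⟩
  obtain ⟨q1, q2⟩ := hQ
  obtain ⟨q1', q2'⟩ := hQ'
  rw [hX] at q1' q2'
  ext b
  by_cases hb : b = XOf π
  · rw [hb, q1, q1']
  · obtain ⟨c1, c2⟩ := q2 b hb
    obtain ⟨c1', c2'⟩ := q2' b hb
    by_cases hc : S' b = XOf π
    · rw [c1 hc, c1' hc]
    · rw [c2 hc, c2' hc]
end
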